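/- arXiv:2602.23838 — 2 statements merged into one kernel-verified Lean document; each statement's English description precedes it below -/
import Mathlib

section
/- There exists a constant κ such that for every integer k ≥ κ and every positive integer x for which all of x, x+1, …, x+k−1 are composite (none of them is prime), the greatest prime factor of the product x(x+1)⋯(x+k−1) satisfies P(x(x+1)⋯(x+k−1)) > (2/7)·k·log k. -/
/-- The greatest prime factor of a natural number (`0` for `n ≤ 1`). -/
def maxPrimeFac (n : ℕ) : ℕ := n.primeFactors.sup id

section PartP1

noncomputable def zq (n : ℕ) (s : ℂ) : ℂ :=
  (s - 1) * ((n + 1 : ℝ) : ℂ) ^ (-s) - (((n + 1 : ℝ) : ℂ) ^ (1 - s) - ((n + 1 + 1 : ℝ) : ℂ) ^ (1 - s))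

lemma cpow_sub_bound {a u : ℝ} (ha : 0 < a) (hu : a ≤ u) (hu1 : u ≤ a + 1) {s : ℂ} (hs : 0 < s.re) :
    ‖(a : ℂ) ^ (-s) - (u : ℂ) ^ (-s)‖ ≤ ‖s‖ * a ^ (-s.re - 1) := by
  have hs0 : -s ≠ 0 := by
    intro h; rw [neg_eq_zero] at h; simp [h] at hs
  have := Convex.norm_image_sub_le_of_norm_hasDerivWithin_le (f := fun y : ℝ => (y : ℂ) ^ (-s))
    (f' := fun y : ℝ => (-s) * (y : ℂ) ^ (-s - 1)) (s := Set.Icc a (a + 1))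
    (C := ‖s‖ * a ^ (-s.re - 1)) (x := a) (y := u)
    (fun y hy => (hasDerivAt_ofReal_cpow_const (by linarith [hy.1] : y ≠ 0) hs0).hasDerivWithinAt)
    (fun y hy => by
      have hy0 : 0 < y := lt_of_lt_of_le ha hy.1
      rw [norm_mul, norm_neg, Complex.norm_cpow_eq_rpow_re_of_pos hy0]
      gcongr ?_ * ?_
      simp only [Complex.sub_re, Complex.neg_re, Complex.one_re]
      exact Real.rpow_le_rpow_of_nonpos ha hy.1 (by linarith))
    (convex_Icc _ _) ⟨le_rfl, by linarith⟩ ⟨hu, hu1⟩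
  rw [norm_sub_rev]
  refine this.trans ?_
  have h1 : ‖u - a‖ ≤ 1 := by rw [Real.norm_of_nonneg (by linarith)]; linarith
  exact mul_le_of_le_one_right (by positivity) h1

lemma zq_bound (n : ℕ) {s : ℂ} (hs : 0 < s.re) :
    ‖zq n s‖ ≤ ‖s - 1‖ * (‖s‖ * (n + 1 : ℝ) ^ (-s.re - 1)) := by
  by_cases h1 : s = 1
  · simp [zq, h1]
  have hs1 : 1 - s ≠ 0 := by intro h; exact h1 (by linear_combination -h)
  set a : ℝ := n + 1 with ha
  have ha0 : 0 < a := by positivity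
  have := Convex.norm_image_sub_le_of_norm_hasDerivWithin_le
    (f := fun y : ℝ => (y : ℂ) * ((s - 1) * (a : ℂ) ^ (-s)) + (y : ℂ) ^ (1 - s))
    (f' := fun y : ℝ => 1 * ((s - 1) * (a : ℂ) ^ (-s)) + (1 - s) * (y : ℂ) ^ (1 - s - 1))
    (s := Set.Icc a (a + 1))
    (C := ‖s - 1‖ * (‖s‖ * a ^ (-s.re - 1))) (x := a) (y := a + 1)
    (fun y hy => by
      have := (hasDerivAt_ofReal_cpow_const (by linarith [hy.1] : y ≠ 0) hs1)
      have h2 : HasDerivAt (fun y : ℝ => (y : ℂ)) 1 y := Complex.ofRealCLM.hasDerivAt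
      exact ((h2.mul_const _).add this).hasDerivWithinAt)
    (fun y hy => by
      have e : 1 * ((s - 1) * (a : ℂ) ^ (-s)) + (1 - s) * (y : ℂ) ^ (1 - s - 1)
        = (s - 1) * ((a : ℂ) ^ (-s) - (y : ℂ) ^ (-s)) := by
        rw [show 1 - s - 1 = -s by ring]; ring
      rw [e, norm_mul]
      gcongr
      exact cpow_sub_bound ha0 hy.1 hy.2 hs)
    (convex_Icc _ _) ⟨le_rfl, by linarith⟩ ⟨by linarith, by linarith⟩
  have e : zq n s = ((a + 1 : ℝ) : ℂ) * ((s - 1) * (a : ℂ) ^ (-s)) + ((a + 1 : ℝ) : ℂ) ^ (1 - s)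
      - ((a : ℂ) * ((s - 1) * (a : ℂ) ^ (-s)) + (a : ℂ) ^ (1 - s)) := by
    rw [zq, ← ha]; push_cast; ring
  rw [e]
  refine this.trans ?_
  simp

lemma summable_shift_rpow {c : ℝ} (hc : 1 < c) : Summable (fun n : ℕ => ((n : ℝ) + 1) ^ (-c)) := by
  have := (summable_nat_add_iff 1).2 (Real.summable_nat_rpow.2 (show -c < -1 by linarith))
  simpa using this

lemma zq_summable {s : ℂ} (hs : 0 < s.re) : Summable (fun n => zq n s) := by
  refine Summable.of_norm_bounded (g := fun n : ℕ => ‖s - 1‖ * (‖s‖ * (n + 1 : ℝ) ^ (-s.re - 1))) ?_ (fun n => zq_bound n hs)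
  have := summable_shift_rpow (show 1 < s.re + 1 by linarith)
  refine ((this.mul_left ‖s‖).mul_left ‖s - 1‖).congr fun n => ?_
  rw [show -(s.re + 1) = -s.re - 1 by ring]

lemma zq_diff (n : ℕ) : Differentiable ℂ (zq n) := by
  have h1 : ((n + 1 : ℝ) : ℂ) ≠ 0 := by exact_mod_cast (by positivity : (n + 1 : ℝ) ≠ 0)
  have h2 : ((n + 1 + 1 : ℝ) : ℂ) ≠ 0 := by exact_mod_cast (by positivity : (n + 1 + 1 : ℝ) ≠ 0)
  unfold zq
  intro s
  refine DifferentiableAt.sub (DifferentiableAt.mul (by fun_prop) ?_) (DifferentiableAt.sub ?_ ?_)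
  · exact DifferentiableAt.const_cpow (by fun_prop) (Or.inl h1)
  · exact DifferentiableAt.const_cpow (by fun_prop) (Or.inl h1)
  · exact DifferentiableAt.const_cpow (by fun_prop) (Or.inl h2)

lemma zq_tsum_diff : DifferentiableOn ℂ (fun s => ∑' n, zq n s) {s | 0 < s.re} := by
  intro s hs
  simp only [Set.mem_ofPred_eq] at hs
  set U : Set ℂ := {w | s.re / 2 < w.re} ∩ Metric.ball 0 (‖s‖ + 1)
  have hU : IsOpen U := (isOpen_lt continuous_const Complex.continuous_re).inter Metric.isOpen_ball
  have hsU : s ∈ U := ⟨by simp only [Set.mem_ofPred_eq]; linarith, by simp⟩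
  have : DifferentiableOn ℂ (fun s => ∑' n, zq n s) U := by
    refine Complex.differentiableOn_tsum_of_summable_norm
      (u := fun n : ℕ => (‖s‖ + 2) * ((‖s‖ + 1) * (n + 1 : ℝ) ^ (-(s.re / 2 + 1)))) ?_
      (fun n => (zq_diff n).differentiableOn) hU ?_
    · exact ((summable_shift_rpow (by linarith)).mul_left _).mul_left _
    · intro n w hw
      have hw1 : s.re / 2 < w.re := hw.1
      have hw2 : ‖w‖ < ‖s‖ + 1 := by simpa using hw.2
      refine (zq_bound n (by linarith)).trans ?_
      have h3 : ‖w - 1‖ ≤ ‖s‖ + 2 := (norm_sub_le _ _).trans (by simp; linarith)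
      gcongr
      · linarith
      · linarith
  exact (this.differentiableAt (hU.mem_nhds hsU)).differentiableWithinAt

lemma zq_sum (N : ℕ) (s : ℂ) : ∑ n ∈ Finset.range N, zq n s =
    (s - 1) * ∑ n ∈ Finset.range N, ((n + 1 : ℝ) : ℂ) ^ (-s) - (1 - ((N + 1 : ℝ) : ℂ) ^ (1 - s)) := by
  induction N with
  | zero => simp
  | succ N ih =>
    rw [Finset.sum_range_succ, ih, Finset.sum_range_succ, zq]
    push_cast
    ring

lemma zeta1_eq_of_one_lt {s : ℂ} (hs : 1 < s.re) : riemannZeta₁ s = 1 + ∑' n, zq n s := by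
  have hs1 : s ≠ 1 := by rintro rfl; simp at hs
  have hs1' : s - 1 ≠ 0 := sub_ne_zero.2 hs1
  have hz : riemannZeta₁ s = (s - 1) * riemannZeta s := by
    rw [riemannZeta_eq_inv_sub_mul hs1]; field_simp
  have h1 := (zq_summable (show 0 < s.re by linarith)).hasSum.tendsto_sum_nat
  have hS : HasSum (fun n : ℕ => ((n + 1 : ℝ) : ℂ) ^ (-s)) (riemannZeta s) := by
    rw [zeta_eq_tsum_one_div_nat_add_one_cpow hs]
    have hsum : Summable (fun n : ℕ => (1 : ℂ) / ((n : ℂ) + 1) ^ s) := by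
      have := (summable_nat_add_iff 1).2 (Complex.summable_one_div_nat_cpow.2 hs)
      simpa using this
    have := hsum.hasSum
    convert this using 2 with n
    · rw [Complex.cpow_neg]; push_cast; simp
  have h2 := hS.tendsto_sum_nat
  have h3 : Filter.Tendsto (fun N : ℕ => ((N + 1 : ℝ) : ℂ) ^ (1 - s)) Filter.atTop (nhds 0) := by
    rw [tendsto_zero_iff_norm_tendsto_zero]
    have : ∀ N : ℕ, ‖((N + 1 : ℝ) : ℂ) ^ (1 - s)‖ = ((N + 1 : ℝ)) ^ (-(s.re - 1)) := fun N => by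
      rw [Complex.norm_cpow_eq_rpow_re_of_pos (by positivity)]
      simp
    simp_rw [this]
    have h4 := (tendsto_rpow_neg_atTop (show 0 < s.re - 1 by linarith))
    exact h4.comp (Filter.tendsto_atTop_add_const_right _ 1 tendsto_natCast_atTop_atTop)
  have h5 := (h2.const_mul (s - 1)).sub (h3.const_sub 1)
  have h6 : (fun N : ℕ => ∑ n ∈ Finset.range N, zq n s) = fun N : ℕ =>
    (s - 1) * ∑ n ∈ Finset.range N, ((n + 1 : ℝ) : ℂ) ^ (-s) - (1 - ((N + 1 : ℝ) : ℂ) ^ (1 - s)) := by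
    funext N; exact zq_sum N s
  rw [h6] at h1
  have := tendsto_nhds_unique h1 h5
  rw [this, hz]; ring

lemma zeta1_eq {s : ℂ} (hs : 0 < s.re) : riemannZeta₁ s = 1 + ∑' n, zq n s := by
  have hopen : IsOpen {s : ℂ | 0 < s.re} := isOpen_lt continuous_const Complex.continuous_re
  have hf : AnalyticOnNhd ℂ riemannZeta₁ {s : ℂ | 0 < s.re} :=
    differentiable_riemannZeta₁.differentiableOn.analyticOnNhd hopen
  have hg : AnalyticOnNhd ℂ (fun s => 1 + ∑' n, zq n s) {s : ℂ | 0 < s.re} :=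
    (zq_tsum_diff.const_add 1).analyticOnNhd hopen
  refine hf.eqOn_of_preconnected_of_eventuallyEq hg (convex_halfSpace_re_gt 0).isPreconnected
    (z₀ := 2) (by simp) ?_ hs
  have : {s : ℂ | 1 < s.re} ∈ nhds (2 : ℂ) :=
    (isOpen_lt continuous_const Complex.continuous_re).mem_nhds (by simp)
  filter_upwards [this] with z hz using zeta1_eq_of_one_lt hz

lemma zeta_bound {η : ℝ} (h0 : 0 < η) (h4 : η ≤ 1 / 4) : ∃ C : ℝ, 0 < C ∧ ∀ s : ℂ, 1 - η ≤ s.re →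
    s.re ≤ 3 → 1 ≤ |s.im| → ‖riemannZeta s‖ ≤ C * |s.im| ^ (2 * η) := by
  have hsum := summable_shift_rpow (show 1 < 1 + η by linarith)
  set Z := ∑' n : ℕ, ((n : ℝ) + 1) ^ (-(1 + η)) with hZ
  have hZ0 : 0 ≤ Z := tsum_nonneg fun n => by positivity
  refine ⟨5 * Z + 2, by positivity, fun s hs1 hs3 ht => ?_⟩
  set T := |s.im| with hT
  have hT0 : 0 < T := by linarith
  set N := ⌊T⌋₊ with hN
  have hN1 : (N : ℝ) ≤ T := Nat.floor_le hT0.le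
  have hN2 : T < N + 1 := Nat.lt_floor_add_one T
  have hs0 : 0 < s.re := by linarith
  have hsne : s ≠ 1 := by rintro rfl; simp at hT; linarith
  have hsT : T ≤ ‖s - 1‖ := by
    have := Complex.abs_im_le_norm (s - 1); simpa using this
  have hpos : 0 < ‖s - 1‖ := by linarith
  have hsn : ‖s‖ ≤ 4 * T := by
    have := Complex.norm_le_abs_re_add_abs_im s
    rw [abs_of_pos hs0] at this; linarith
  have key : (s - 1) * riemannZeta s = (s - 1) * ∑ n ∈ Finset.range N, ((n + 1 : ℝ) : ℂ) ^ (-s)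
      + ((N + 1 : ℝ) : ℂ) ^ (1 - s) + ∑' n, zq (n + N) s := by
    have hz : riemannZeta₁ s = (s - 1) * riemannZeta s := by
      rw [riemannZeta_eq_inv_sub_mul hsne]
      have := sub_ne_zero.2 hsne
      field_simp
    rw [← hz, zeta1_eq hs0, ← (zq_summable hs0).sum_add_tsum_nat_add N, zq_sum]
    ring
  have b1 : ‖∑ n ∈ Finset.range N, ((n + 1 : ℝ) : ℂ) ^ (-s)‖ ≤ Z * T ^ (2 * η) := by
    refine (norm_sum_le _ _).trans ?_
    have : ∀ n ∈ Finset.range N, ‖((n + 1 : ℝ) : ℂ) ^ (-s)‖ ≤ ((n : ℝ) + 1) ^ (-(1 + η)) * T ^ (2 * η) := by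
      intro n hn
      have hn' : (n : ℝ) + 1 ≤ N := by exact_mod_cast Finset.mem_range.1 hn
      rw [Complex.norm_cpow_eq_rpow_re_of_pos (by positivity)]
      have h1 : ((n : ℝ) + 1) ^ (-s).re ≤ ((n : ℝ) + 1) ^ (-(1 + η) + 2 * η) := by
        apply Real.rpow_le_rpow_of_exponent_le (by linarith [n.cast_nonneg (α := ℝ)])
        simp; linarith
      refine h1.trans ?_
      rw [Real.rpow_add (by positivity)]
      gcongr
      linarith
    refine (Finset.sum_le_sum this).trans ?_
    rw [← Finset.sum_mul]
    gcongr
    exact hsum.sum_le_tsum _ (fun n _ => by positivity)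
  have b2 : ‖((N + 1 : ℝ) : ℂ) ^ (1 - s)‖ ≤ ‖s - 1‖ * (2 * T ^ (2 * η)) := by
    rw [Complex.norm_cpow_eq_rpow_re_of_pos (by positivity)]
    have h1 : ((N : ℝ) + 1) ^ (1 - s).re ≤ (2 * T) ^ (2 * η) := by
      have : ((N : ℝ) + 1) ^ (1 - s).re ≤ ((N : ℝ) + 1) ^ (2 * η) := by
        apply Real.rpow_le_rpow_of_exponent_le (by linarith [N.cast_nonneg (α := ℝ)])
        simp; linarith
      refine this.trans (Real.rpow_le_rpow (by positivity) (by linarith) (by positivity))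
    rw [Real.mul_rpow (by norm_num) hT0.le] at h1
    have h2 : (2 : ℝ) ^ (2 * η) ≤ 2 := by
      calc (2 : ℝ) ^ (2 * η) ≤ 2 ^ (1 : ℝ) := Real.rpow_le_rpow_of_exponent_le (by norm_num) (by linarith)
        _ = 2 := by norm_num
    have h3 : (2 : ℝ) ^ (2 * η) * T ^ (2 * η) ≤ 2 * T ^ (2 * η) := by gcongr
    refine (h1.trans h3).trans ?_
    exact le_mul_of_one_le_left (by positivity) (by linarith)
  have b3 : ‖∑' n, zq (n + N) s‖ ≤ ‖s - 1‖ * (4 * Z * T ^ (2 * η)) := by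
    have hb : ∀ n : ℕ, ‖zq (n + N) s‖ ≤ (‖s - 1‖ * (4 * T ^ (2 * η))) * (((n + N : ℕ) : ℝ) + 1) ^ (-(1 + η)) := by
      intro n
      refine (zq_bound (n + N) hs0).trans ?_
      have hnT : T ≤ ((n + N : ℕ) : ℝ) + 1 := by push_cast; linarith [n.cast_nonneg (α := ℝ)]
      have h1 : (((n + N : ℕ) : ℝ) + 1) ^ (-s.re - 1) ≤ (((n + N : ℕ) : ℝ) + 1) ^ (-(1 + η)) * T ^ (2 * η - 1) := by
        have : (((n + N : ℕ) : ℝ) + 1) ^ (-s.re - 1) ≤ (((n + N : ℕ) : ℝ) + 1) ^ (-(1 + η) + (2 * η - 1)) := by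
          apply Real.rpow_le_rpow_of_exponent_le (by linarith)
          linarith
        refine this.trans ?_
        rw [Real.rpow_add (by positivity)]
        gcongr ?_ * ?_
        exact Real.rpow_le_rpow_of_nonpos hT0 hnT (by linarith)
      have h2 : T ^ (2 * η) = T ^ (2 * η - 1) * T := by
        rw [← Real.rpow_add_one hT0.ne']; congr 1; ring
      calc ‖s - 1‖ * (‖s‖ * (((n + N : ℕ) : ℝ) + 1) ^ (-s.re - 1))
          ≤ ‖s - 1‖ * ((4 * T) * ((((n + N : ℕ) : ℝ) + 1) ^ (-(1 + η)) * T ^ (2 * η - 1))) := by gcongr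
        _ = _ := by rw [h2]; ring
    have hsN : Summable fun n : ℕ => (((n + N : ℕ) : ℝ) + 1) ^ (-(1 + η)) :=
      (summable_nat_add_iff N).2 hsum
    refine (tsum_of_norm_bounded (hsN.mul_left _).hasSum hb).trans ?_
    rw [tsum_mul_left]
    have : ∑' n : ℕ, (((n + N : ℕ) : ℝ) + 1) ^ (-(1 + η)) ≤ Z := by
      have := hsum.sum_add_tsum_nat_add N
      rw [hZ, ← this]
      have : 0 ≤ ∑ n ∈ Finset.range N, ((n : ℝ) + 1) ^ (-(1 + η)) := Finset.sum_nonneg fun n _ => by positivity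
      linarith
    calc _ ≤ (‖s - 1‖ * (4 * T ^ (2 * η))) * Z := by gcongr
      _ = _ := by ring
  have : ‖s - 1‖ * ‖riemannZeta s‖ ≤ ‖s - 1‖ * ((5 * Z + 2) * T ^ (2 * η)) := by
    rw [← norm_mul, key]
    refine (norm_add₃_le).trans ?_
    rw [norm_mul]
    have : ‖s - 1‖ * ‖∑ n ∈ Finset.range N, ((n + 1 : ℝ) : ℂ) ^ (-s)‖ ≤ ‖s - 1‖ * (Z * T ^ (2 * η)) := by gcongr
    linarith
  exact le_of_mul_le_mul_left this hpos

end PartP1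

section PartP2

lemma zeta_341 {x : ℝ} (hx : 0 < x) (y : ℝ) :
    1 ≤ ‖riemannZeta (1 + x)‖ ^ 3 * ‖riemannZeta (1 + x + Complex.I * y)‖ ^ 4 *
      ‖riemannZeta (1 + x + 2 * Complex.I * y)‖ := by
  have := DirichletCharacter.norm_LFunction_product_ge_one (1 : DirichletCharacter ℂ 1) hx y
  simpa [DirichletCharacter.LFunctionTrivChar, DirichletCharacter.LFunction_modOne_eq] using this

lemma zeta_near_one : ∃ K : ℝ, 1 ≤ K ∧ ∀ x : ℝ, 0 < x → x ≤ 2 → ‖riemannZeta (1 + x)‖ ≤ K / x := by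
  have hc : Continuous (fun x : ℝ => riemannZeta₁ (1 + x)) :=
    differentiable_riemannZeta₁.continuous.comp (by fun_prop)
  obtain ⟨K, hK⟩ := (isCompact_Icc (a := (0 : ℝ)) (b := 2)).exists_bound_of_continuousOn hc.continuousOn
  refine ⟨max K 1, le_max_right _ _, fun x hx hx2 => ?_⟩
  have hne : (1 + x : ℂ) ≠ 1 := by
    intro h; have : (x : ℂ) = 0 := by linear_combination h
    exact hx.ne' (by exact_mod_cast this)
  rw [riemannZeta_eq_inv_sub_mul hne, norm_mul, norm_inv, add_sub_cancel_left,
    Complex.norm_real, Real.norm_of_nonneg hx.le, inv_mul_eq_div]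
  gcongr
  exact (hK x ⟨hx.le, hx2⟩).trans (le_max_left _ _)

lemma rpow_two_mul_le {T ε : ℝ} (hT : 0 < T) (h0 : 0 ≤ ε) (h1 : ε ≤ 1) {y : ℝ} (hy0 : 0 ≤ y) (hy : y ≤ 2 * T) :
    y ^ ε ≤ 2 * T ^ ε := by
  calc y ^ ε ≤ (2 * T) ^ ε := Real.rpow_le_rpow hy0 hy h0
    _ = 2 ^ ε * T ^ ε := Real.mul_rpow (by norm_num) hT.le
    _ ≤ 2 * T ^ ε := by
      gcongr
      calc (2 : ℝ) ^ ε ≤ 2 ^ (1 : ℝ) := Real.rpow_le_rpow_of_exponent_le (by norm_num) h1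
        _ = 2 := by norm_num

lemma im_near {s z : ℂ} {r : ℝ} (h : ‖z - s‖ ≤ r) : |s.im| - r ≤ |z.im| ∧ |z.im| ≤ |s.im| + r ∧
    s.re - r ≤ z.re ∧ z.re ≤ s.re + r := by
  have h1 := (Complex.abs_im_le_norm (z - s)).trans h
  have h2 := (Complex.abs_re_le_norm (z - s)).trans h
  rw [Complex.sub_im] at h1
  rw [Complex.sub_re] at h2
  have h3 := abs_sub_abs_le_abs_sub s.im z.im
  have h4 := abs_sub_abs_le_abs_sub z.im s.im
  rw [abs_sub_comm] at h3
  have h5 := abs_le.1 h2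
  refine ⟨by linarith, by linarith, by linarith, by linarith⟩

lemma zeta_deriv_bound {ε : ℝ} (h0 : 0 < ε) (h4 : ε ≤ 1 / 2) : ∃ C : ℝ, 1 ≤ C ∧ ∀ s : ℂ, 1 - ε / 4 ≤ s.re →
    s.re ≤ 5 / 2 → 3 / 2 ≤ |s.im| → ‖riemannZeta s‖ ≤ C * |s.im| ^ ε ∧ ‖deriv riemannZeta s‖ ≤ C * |s.im| ^ ε := by
  obtain ⟨C, hC0, hC⟩ := zeta_bound (η := ε / 2) (by linarith) (by linarith)
  rw [show 2 * (ε / 2) = ε by ring] at hC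
  refine ⟨max (C * 2 / (ε / 4)) (max C 1), (le_max_right _ _).trans (le_max_right _ _) , fun s h1 h2 h3 => ⟨?_, ?_⟩⟩
  · refine (hC s (by linarith) (by linarith) (by linarith)).trans ?_
    gcongr
    exact (le_max_left _ _).trans (le_max_right _ _)
  · have hd : ∀ z, ‖z - s‖ ≤ ε / 4 → 1 - ε / 2 ≤ z.re ∧ z.re ≤ 3 ∧ 1 ≤ |z.im| ∧ |z.im| ≤ 2 * |s.im| := by
      intro z hz
      obtain ⟨a, b, c, d⟩ := im_near hz
      refine ⟨by linarith, by linarith, by linarith, by linarith⟩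
    have hdiff : DiffContOnCl ℂ riemannZeta (Metric.ball s (ε / 4)) := by
      apply DifferentiableOn.diffContOnCl
      intro z hz
      rw [closure_ball _ (by positivity)] at hz
      have := hd z (by simpa [dist_eq_norm] using hz)
      refine (differentiableAt_riemannZeta ?_).differentiableWithinAt
      rintro rfl
      simp at this; linarith
    refine (Complex.norm_deriv_le_of_forall_mem_sphere_norm_le (by positivity) hdiff (C := C * 2 * |s.im| ^ ε) ?_).trans ?_
    · intro z hz
      obtain ⟨a, b, c, d⟩ := hd z (by rw [Metric.mem_sphere, dist_eq_norm] at hz; exact hz.le)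
      refine (hC z a b c).trans ?_
      rw [mul_assoc]
      gcongr
      exact rpow_two_mul_le (by linarith) h0.le (by linarith) (abs_nonneg _) d
    · rw [mul_div_right_comm]
      gcongr
      exact le_max_left _ _

lemma zeta_lower {ε : ℝ} (h0 : 0 < ε) (h4 : ε ≤ 1 / 2) : ∃ c : ℝ, 0 < c ∧ c ≤ ε / 4 ∧ ∀ s : ℂ, 3 / 2 ≤ |s.im| →
    1 - c / (|s.im| ^ ε) ^ 5 ≤ s.re → s.re ≤ 5 / 2 → c / (|s.im| ^ ε) ^ 4 ≤ ‖riemannZeta s‖ := by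
  obtain ⟨C, hC1, hC⟩ := zeta_deriv_bound h0 h4
  obtain ⟨K, hK1, hK⟩ := zeta_near_one
  set D := 2 * C * K ^ 3 with hD
  have hK3 : 1 ≤ K ^ 3 := one_le_pow₀ hK1
  have hD1 : 1 ≤ D := by rw [hD]; nlinarith
  have hD4 : D ≤ D ^ 4 := le_self_pow₀ hD1 (by norm_num)
  set u := min (1 / (4 * C * D)) (ε / 4) with hu
  have hu0 : 0 < u := by rw [hu]; apply lt_min <;> positivity
  have hu1 : u ≤ 1 / (4 * C * D) := min_le_left _ _
  have hu2 : u ≤ ε / 4 := min_le_right _ _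
  have hu3 : u ≤ 1 := by linarith
  have hu4 : u ^ 4 ≤ u := pow_le_of_le_one hu0.le hu3 (by norm_num)
  have huC : 2 * C * u ^ 4 ≤ u ^ 3 / (2 * D) := by
    have : u * (4 * C * D) ≤ 1 := by rwa [le_div_iff₀ (by positivity)] at hu1
    rw [le_div_iff₀ (by positivity)]
    have h3 : 0 ≤ u ^ 3 := by positivity
    nlinarith
  -- main 3-4-1
  have main : ∀ s : ℂ, 3 / 2 ≤ |s.im| → 1 + u ^ 4 / (|s.im| ^ ε) ^ 5 ≤ s.re → s.re ≤ 5 / 2 →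
      u ^ 3 / D / (|s.im| ^ ε) ^ 4 ≤ ‖riemannZeta s‖ := by
    intro s ht h1 h2
    set a := |s.im| ^ ε with ha
    have ha1 : 1 ≤ a := Real.one_le_rpow (by linarith) h0.le
    have ha0 : 0 < a := by linarith
    set x := s.re - 1 with hx
    have hxu : u ^ 4 / a ^ 5 ≤ x := by linarith
    have hx0 : 0 < x := lt_of_lt_of_le (by positivity) hxu
    have e1 : (1 + x + Complex.I * s.im : ℂ) = s := by
      apply Complex.ext <;> simp [hx]
    have A := zeta_341 hx0 s.im
    rw [e1] at A
    have A1 := hK x hx0 (by linarith)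
    have A2 := (hC (1 + x + 2 * Complex.I * s.im) (by simp; linarith) (by simp; linarith)
      (by simp [abs_mul]; linarith)).1
    have A3 : |(1 + x + 2 * Complex.I * s.im : ℂ).im| ^ ε ≤ 2 * a := by
      apply rpow_two_mul_le (by linarith) h0.le (by linarith) (abs_nonneg _)
      simp [abs_mul]
    have A4 : ‖riemannZeta (1 + x + 2 * Complex.I * s.im)‖ ≤ C * (2 * a) :=
      A2.trans (by gcongr)
    have B : 1 ≤ (K / x) ^ 3 * ‖riemannZeta s‖ ^ 4 * (C * (2 * a)) := A.trans (by gcongr)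
    have B2 : x ^ 3 ≤ D * a * ‖riemannZeta s‖ ^ 4 := by
      have e : (K / x) ^ 3 * ‖riemannZeta s‖ ^ 4 * (C * (2 * a)) = D * a * ‖riemannZeta s‖ ^ 4 / x ^ 3 := by
        rw [hD]; field_simp
      rw [e, le_div_iff₀ (by positivity)] at B
      linarith
    have B3 : (u ^ 4 / a ^ 5) ^ 3 ≤ x ^ 3 := by gcongr
    refine le_of_pow_le_pow_left₀ (n := 4) (by norm_num) (norm_nonneg _) ?_
    have e2 : (u ^ 3 / D / a ^ 4) ^ 4 = (u ^ 4 / a ^ 5) ^ 3 / (D ^ 4 * a) := by field_simp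
    rw [e2, div_le_iff₀ (by positivity)]
    calc _ ≤ D * a * ‖riemannZeta s‖ ^ 4 := B3.trans B2
      _ ≤ D ^ 4 * a * ‖riemannZeta s‖ ^ 4 := by gcongr
      _ = _ := by ring
  refine ⟨min (u ^ 4) (u ^ 3 / (2 * D)), lt_min (by positivity) (by positivity),
    (min_le_left _ _).trans (hu4.trans hu2), fun s ht h1 h2 => ?_⟩
  set a := |s.im| ^ ε with ha
  have ha1 : 1 ≤ a := Real.one_le_rpow (by linarith) h0.le
  have ha0 : 0 < a := by linarith
  have hgoal : min (u ^ 4) (u ^ 3 / (2 * D)) / a ^ 4 ≤ u ^ 3 / (2 * D) / a ^ 4 := by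
    gcongr; exact min_le_right _ _
  refine hgoal.trans ?_
  set x := u ^ 4 / a ^ 5 with hx
  have hx0 : 0 < x := by positivity
  have hxe : x ≤ ε / 4 := by
    calc x ≤ u ^ 4 := div_le_self (by positivity) (one_le_pow₀ ha1)
      _ ≤ _ := hu4.trans hu2
  have h1' : 1 - x ≤ s.re := by
    refine le_trans ?_ h1
    have : min (u ^ 4) (u ^ 3 / (2 * D)) / a ^ 5 ≤ x := by rw [hx]; gcongr; exact min_le_left _ _
    linarith
  by_cases hsx : 1 + x ≤ s.re
  · refine le_trans ?_ (main s ht hsx h2)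
    gcongr
    linarith
  · push Not at hsx
    set s' : ℂ := ⟨1 + x, s.im⟩ with hs'
    have M := main s' ht le_rfl (by simp only [hs']; linarith)
    have hseg := Convex.norm_image_sub_le_of_norm_deriv_le (𝕜 := ℂ) (f := riemannZeta)
      (s := {z : ℂ | 1 - x ≤ z.re} ∩ {z : ℂ | z.re ≤ 1 + x} ∩ {z : ℂ | z.im = s.im}) (C := C * a) (x := s') (y := s)
      (fun z hz => by
        refine differentiableAt_riemannZeta ?_
        rintro rfl
        have : (1 : ℂ).im = s.im := hz.2
        simp at this
        rw [← this] at ht; simp at ht; linarith)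
      (fun z hz => by
        have e : z.im = s.im := hz.2
        have := (hC z (by have := hz.1.1; simp only [Set.mem_ofPred_eq] at this; linarith)
          (by have := hz.1.2; simp only [Set.mem_ofPred_eq] at this; linarith) (by rw [e]; exact ht)).2
        rwa [e] at this)
      (by
        refine ((convex_halfSpace_re_ge _).inter (convex_halfSpace_re_le _)).inter ?_
        have : {z : ℂ | z.im = s.im} = Complex.imLm ⁻¹' {s.im} := by ext; simp
        rw [this]
        exact (convex_singleton _).linear_preimage _)
      (by simp [hs']; linarith) (by simp; constructor <;> linarith)
    have hn : ‖s - s'‖ ≤ 2 * x := by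
      have : s - s' = ((s.re - (1 + x) : ℝ) : ℂ) := by apply Complex.ext <;> simp [hs']
      rw [this, Complex.norm_real, Real.norm_eq_abs, abs_le]; constructor <;> linarith
    have hle : ‖riemannZeta s - riemannZeta s'‖ ≤ u ^ 3 / (2 * D) / a ^ 4 := by
      refine hseg.trans ?_
      calc C * a * ‖s - s'‖ ≤ C * a * (2 * x) := by gcongr
        _ = (2 * C * u ^ 4) / a ^ 4 := by rw [hx]; field_simp
        _ ≤ _ := by gcongr
    have h6 := norm_sub_norm_le (riemannZeta s') (riemannZeta s)
    rw [norm_sub_rev] at h6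
    have e3 : u ^ 3 / D / a ^ 4 = u ^ 3 / (2 * D) / a ^ 4 + u ^ 3 / (2 * D) / a ^ 4 := by field_simp; norm_num
    have M' : u ^ 3 / D / a ^ 4 ≤ ‖riemannZeta s'‖ := M
    linarith

noncomputable def DD (s : ℂ) : ℂ := -deriv riemannZeta₁ s / riemannZeta₁ s - riemannZeta₀ s

lemma DD_eq {s : ℂ} (hs : s ≠ 1) (hz : riemannZeta s ≠ 0) :
    DD s = -deriv riemannZeta s / riemannZeta s - riemannZeta s := by
  have h1 : s - 1 ≠ 0 := sub_ne_zero.2 hs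
  have h2 := riemannZeta_eq_inv_sub_mul hs
  have h3 : riemannZeta₁ s ≠ 0 := by
    intro h; rw [h, mul_zero] at h2; exact hz h2
  have h4 : deriv riemannZeta s = -((s - 1) ^ 2)⁻¹ * riemannZeta₁ s + (s - 1)⁻¹ * deriv riemannZeta₁ s := by
    have : riemannZeta =ᶠ[nhds s] fun z => (z - 1)⁻¹ * riemannZeta₁ z := by
      filter_upwards [isOpen_ne.mem_nhds hs] with z hz using riemannZeta_eq_inv_sub_mul hz
    rw [this.deriv_eq]
    have hd := ((hasDerivAt_id s).sub_const 1).inv h1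
    have := hd.mul (differentiable_riemannZeta₁ s).hasDerivAt
    rw [show (fun z => (z - 1)⁻¹ * riemannZeta₁ z) = (fun z => (id z - 1)⁻¹) * riemannZeta₁ from rfl]
    erw [this.deriv]
    simp [div_eq_mul_inv]
  have h5 := riemannZeta_eq_inv_sub_add hs
  have h6 : riemannZeta₀ s = riemannZeta s - (s - 1)⁻¹ := by rw [h5]; ring
  rw [DD, h4, h6, h2]
  field_simp
  ring

lemma zeta1_ne {s : ℂ} (hs : 1 ≤ s.re) : riemannZeta₁ s ≠ 0 := by
  by_cases h : s = 1
  · simp [h]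
  · intro h0
    have := riemannZeta_eq_inv_sub_mul h
    rw [h0, mul_zero] at this
    exact riemannZeta_ne_zero_of_one_le_re hs this

lemma DD_analytic : AnalyticOnNhd ℂ DD {s | riemannZeta₁ s ≠ 0} := by
  have ho : IsOpen {s | riemannZeta₁ s ≠ 0} := isOpen_ne_fun differentiable_riemannZeta₁.continuous continuous_const
  have h1 : ∀ s, AnalyticAt ℂ riemannZeta₁ s := fun s => differentiable_riemannZeta₁.analyticAt s
  have h0 : ∀ s, AnalyticAt ℂ riemannZeta₀ s := fun s => differentiable_riemannZeta₀.analyticAt s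
  intro s hs
  exact ((h1 s).deriv.neg.div (h1 s) hs).sub (h0 s)

lemma DD_bound (j : ℕ) : ∃ C : ℝ, 0 < C ∧ ∀ s : ℂ, 1 < s.re → s.re ≤ 2 →
    ‖iteratedDeriv j DD s‖ ≤ C * (1 + |s.im|) := by
  have hcomp : IsCompact (Set.Icc (1 : ℝ) 2 ×ℂ Set.Icc (-2 : ℝ) 2) := isCompact_Icc.reProdIm isCompact_Icc
  have hcont : ContinuousOn (iteratedDeriv j DD) (Set.Icc (1 : ℝ) 2 ×ℂ Set.Icc (-2 : ℝ) 2) := by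
    intro s hs
    have h1 : 1 ≤ s.re := hs.1.1
    have h2 : AnalyticAt ℂ (deriv^[j] DD) s := (DD_analytic s (zeta1_ne h1)).iterated_deriv j
    rw [iteratedDeriv_eq_iterate]
    exact h2.continuousAt.continuousWithinAt
  obtain ⟨C1, hC1⟩ := hcomp.exists_bound_of_continuousOn hcont
  set ε : ℝ := 1 / (5 * j + 5) with hε
  have hε0 : 0 < ε := by positivity
  have hε1 : ε ≤ 1 / 5 := by
    rw [hε]; gcongr; linarith [j.cast_nonneg (α := ℝ)]
  obtain ⟨C, hC1', hC⟩ := zeta_deriv_bound hε0 (by linarith)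
  obtain ⟨c, hc0, hc1, hc⟩ := zeta_lower hε0 (by linarith)
  set B : ℝ := j.factorial * (C * 2 * 16 / c + C * 2) * (32 / c) ^ j with hB
  refine ⟨max C1 0 + B, by positivity, fun s h1 h2 => ?_⟩
  have hB0 : 0 < B := by positivity
  by_cases ht : |s.im| ≤ 2
  · have := hC1 s ⟨⟨h1.le, h2⟩, abs_le.1 ht⟩
    have h5 := le_max_left C1 0
    have h6 := le_max_right C1 0
    nlinarith [abs_nonneg s.im]
  push Not at ht
  set T := |s.im| with hT
  have hT0 : 0 < T := by linarith
  set a := T ^ ε with ha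
  have ha1 : 1 ≤ a := Real.one_le_rpow (by linarith) hε0.le
  have ha0 : 0 < a := by linarith
  set r := c / (2 * a) ^ 5 with hr
  have hr0 : 0 < r := by positivity
  have hrc' : r ≤ c := div_le_self hc0.le (one_le_pow₀ (by linarith))
  have hrc : r ≤ 1 / 4 := by linarith
  have hd : ∀ z, ‖z - s‖ ≤ r → z ≠ 1 ∧ riemannZeta z ≠ 0 ∧ ‖DD z‖ ≤ (C * 2 * 16 / c + C * 2) * a ^ 5 := by
    intro z hz
    obtain ⟨p1, p2, p3, p4⟩ := im_near hz
    have hzT : |z.im| ^ ε ≤ 2 * a := rpow_two_mul_le hT0 hε0.le (by linarith) (abs_nonneg _) (by linarith)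
    have hz0 : 1 ≤ |z.im| ^ ε := Real.one_le_rpow (by linarith) hε0.le
    have hz1 : z ≠ 1 := by rintro rfl; simp at p1; linarith
    have hrz : r ≤ c / (|z.im| ^ ε) ^ 5 := by rw [hr]; gcongr
    have lo := hc z (by linarith) (by linarith) (by linarith)
    have lo' : c / (2 * a) ^ 4 ≤ ‖riemannZeta z‖ := by
      refine le_trans ?_ lo
      gcongr
    obtain ⟨u1, u2⟩ := hC z (by linarith) (by linarith) (by linarith)
    have u1' : ‖riemannZeta z‖ ≤ C * (2 * a) := u1.trans (by gcongr)
    have u2' : ‖deriv riemannZeta z‖ ≤ C * (2 * a) := u2.trans (by gcongr)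
    have hne : riemannZeta z ≠ 0 := by
      rw [← norm_pos_iff]; exact lt_of_lt_of_le (by positivity) lo'
    refine ⟨hz1, hne, ?_⟩
    rw [DD_eq hz1 hne]
    refine (norm_sub_le _ _).trans ?_
    rw [norm_div, norm_neg]
    calc _ ≤ C * (2 * a) / (c / (2 * a) ^ 4) + C * (2 * a) := by gcongr
      _ = (C * 2 * 16 / c) * a ^ 5 + C * 2 * a := by field_simp; ring
      _ ≤ (C * 2 * 16 / c) * a ^ 5 + C * 2 * a ^ 5 := by
        gcongr; exact le_self_pow₀ ha1 (by norm_num)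
      _ = _ := by ring
  have hdiff : DiffContOnCl ℂ DD (Metric.ball s r) := by
    apply DifferentiableOn.diffContOnCl
    intro z hz
    rw [closure_ball _ hr0.ne'] at hz
    obtain ⟨q1, q2, _⟩ := hd z (by simpa [dist_eq_norm] using hz)
    refine (DD_analytic z ?_).differentiableAt.differentiableWithinAt
    intro h
    rw [riemannZeta_eq_inv_sub_mul q1, h, mul_zero] at q2
    exact q2 rfl
  refine (Complex.norm_iteratedDeriv_le_of_forall_mem_sphere_norm_le j hr0 hdiff
    (fun z hz => (hd z (by rw [Metric.mem_sphere, dist_eq_norm] at hz; exact hz.le)).2.2)).trans ?_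
  have e1 : j.factorial * ((C * 2 * 16 / c + C * 2) * a ^ 5) / r ^ j = B * a ^ (5 * j + 5) := by
    rw [hB, hr, pow_add, pow_mul, div_pow, div_pow]
    field_simp
    rw [mul_pow]; norm_num
  rw [e1]
  have e2 : a ^ (5 * j + 5) = T := by
    rw [ha, ← Real.rpow_natCast, ← Real.rpow_mul hT0.le, hε]
    push_cast
    rw [one_div_mul_cancel (by positivity), Real.rpow_one]
  rw [e2]
  have h6 := le_max_right C1 0
  nlinarith

end PartP2

section PartP3

open MeasureTheory FourierTransform ArithmeticFunction LSeries

noncomputable def aL (n : ℕ) : ℂ := ((ArithmeticFunction.vonMangoldt n : ℝ) : ℂ) - 1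

lemma aL_summable {s : ℂ} (hs : 1 < s.re) : LSeriesSummable aL s := by
  have h1 := ArithmeticFunction.LSeriesSummable_vonMangoldt hs
  have h2 : LSeriesSummable 1 s := LSeriesSummable_one_iff.mpr hs
  exact h1.sub h2

lemma aL_series {s : ℂ} (hs : 1 < s.re) : LSeries aL s = DD s := by
  have h1 := ArithmeticFunction.LSeriesSummable_vonMangoldt hs
  have h2 : LSeriesSummable 1 s := LSeriesSummable_one_iff.mpr hs
  have h3 := LSeries_sub h1 h2
  rw [ArithmeticFunction.LSeries_vonMangoldt_eq_deriv_riemannZeta_div hs,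
    LSeries_one_eq_riemannZeta hs] at h3
  rw [DD_eq (by rintro rfl; simp at hs) (riemannZeta_ne_zero_of_one_le_re hs.le), ← h3]
  rfl

lemma aL_abs : abscissaOfAbsConv aL ≤ 1 := by
  refine abscissaOfAbsConv_le_of_forall_lt_LSeriesSummable fun y hy => ?_
  exact aL_summable (by simpa using hy)

lemma aLj_summable (j : ℕ) {s : ℂ} (hs : 1 < s.re) : LSeriesSummable (logMul^[j] aL) s := by
  apply LSeriesSummable_of_abscissaOfAbsConv_lt_re
  rw [absicssaOfAbsConv_logPowMul]
  exact aL_abs.trans_lt (by exact_mod_cast hs)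

lemma aLj_bound (j : ℕ) : ∃ C : ℝ, 0 < C ∧ ∀ s : ℂ, 1 < s.re → s.re ≤ 2 →
    ‖LSeries (logMul^[j] aL) s‖ ≤ C * (1 + |s.im|) := by
  obtain ⟨C, hC, h⟩ := DD_bound j
  refine ⟨C, hC, fun s h1 h2 => ?_⟩
  have h3 := LSeries_iteratedDeriv (f := aL) j (s := s) (aL_abs.trans_lt (by exact_mod_cast h1))
  have h4 : LSeries aL =ᶠ[nhds s] DD := by
    have : {z : ℂ | 1 < z.re} ∈ nhds s := (isOpen_lt continuous_const Complex.continuous_re).mem_nhds h1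
    filter_upwards [this] with z hz using aL_series hz
  rw [h4.iteratedDeriv_eq] at h3
  have := h s h1 h2
  rw [h3] at this
  simpa using this

lemma logMul_iter (j : ℕ) (f : ℕ → ℂ) (n : ℕ) : logMul^[j] f n = ((Real.log n : ℝ) : ℂ) ^ j * f n := by
  induction j generalizing f with
  | zero => simp
  | succ j ih =>
    rw [Function.iterate_succ, Function.comp_apply, ih]
    simp only [logMul]
    rw [pow_succ, Complex.natCast_log]; ring

lemma fourier_inv_pt (w : SchwartzMap ℝ ℂ) (v : ℝ) : w v = ∫ ξ : ℝ,
    Complex.exp (2 * Real.pi * Complex.I * v * ξ) * (𝓕 w : SchwartzMap ℝ ℂ) ξ := by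
  have : (𝓕⁻ (𝓕 w) : SchwartzMap ℝ ℂ) = w := by simp
  conv_lhs => rw [← this]
  rw [SchwartzMap.fourierInv_coe, Real.fourierInv_eq']
  congr 1; ext ξ
  simp
  left; congr 1; ring

lemma term_shift (f : ℕ → ℂ) (σ τ : ℝ) (n : ℕ) :
    LSeries.term f (σ - τ * Complex.I) n = LSeries.term f σ n *
      Complex.exp (Complex.I * τ * Real.log n) := by
  rcases eq_or_ne n 0 with rfl | hn
  · simp
  rw [LSeries.term_of_ne_zero hn, LSeries.term_of_ne_zero hn]
  have hn' : (n : ℂ) ≠ 0 := by exact_mod_cast hn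
  rw [Complex.cpow_sub _ _ hn', Complex.cpow_def_of_ne_zero hn' (τ * Complex.I), ← Complex.natCast_log]
  have : Complex.exp (Complex.I * τ * Real.log n) = Complex.exp (Complex.log n * (τ * Complex.I)) := by
    rw [Complex.natCast_log]; congr 1; ring
  rw [this, Complex.natCast_log]
  field_simp

lemma kernel_bound (w : SchwartzMap ℝ ℂ) : ∃ K : ℝ, 0 < K ∧ ∀ (f : ℕ → ℂ) (σ C L δ : ℝ), 0 < C → 0 < δ → δ ≤ 1 →
    LSeriesSummable f σ →
    (∀ τ : ℝ, ‖LSeries f (σ - τ * Complex.I)‖ ≤ C * (1 + |τ|)) →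
    ‖∑' n, LSeries.term f σ n * w ((Real.log n - L) / δ)‖ ≤ C * K / δ := by
  set g : SchwartzMap ℝ ℂ := 𝓕 w with hg
  have i0 : Integrable (fun ξ : ℝ => ‖g ξ‖) := g.integrable.norm
  have i1 : Integrable (fun ξ : ℝ => |ξ| * ‖g ξ‖) := by
    simpa using g.integrable_pow_mul volume 1
  have i2 : Integrable (fun ξ : ℝ => (1 + 2 * Real.pi * |ξ|) * ‖g ξ‖) := by
    have := i0.add (i1.const_mul (2 * Real.pi))
    refine this.congr (Filter.Eventually.of_forall fun x => ?_)
    simp; ring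
  refine ⟨(∫ ξ : ℝ, (1 + 2 * Real.pi * |ξ|) * ‖g ξ‖) + 1, ?_, ?_⟩
  · have : 0 ≤ ∫ ξ : ℝ, (1 + 2 * Real.pi * |ξ|) * ‖g ξ‖ := integral_nonneg fun ξ => by positivity
    linarith
  intro f σ C L δ hC hδ hδ1 hf hb
  set F : ℕ → ℝ → ℂ := fun n ξ => LSeries.term f σ n *
    (Complex.exp (2 * Real.pi * Complex.I * (((Real.log n - L) / δ : ℝ) : ℂ) * ξ) * g ξ) with hF
  have hnorm : ∀ n ξ, ‖F n ξ‖ = ‖LSeries.term f σ n‖ * ‖g ξ‖ := by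
    intro n ξ
    simp only [hF, norm_mul]
    congr 1
    have : Complex.exp (2 * Real.pi * Complex.I * (((Real.log n - L) / δ : ℝ) : ℂ) * ξ) =
      Complex.exp (((2 * Real.pi * ((Real.log n - L) / δ) * ξ : ℝ) : ℂ) * Complex.I) := by
      congr 1; push_cast; ring
    rw [this, Complex.norm_exp_ofReal_mul_I, one_mul]
  have hint : ∀ n, Integrable (F n) := by
    intro n
    refine Integrable.const_mul ?_ _
    refine (g.integrable (μ := volume)).bdd_mul (c := 1) (by fun_prop) ?_
    refine Filter.Eventually.of_forall fun ξ => ?_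
    have : Complex.exp (2 * Real.pi * Complex.I * (((Real.log n - L) / δ : ℝ) : ℂ) * ξ) =
      Complex.exp (((2 * Real.pi * ((Real.log n - L) / δ) * ξ : ℝ) : ℂ) * Complex.I) := by
      congr 1; push_cast; ring
    rw [this, Complex.norm_exp_ofReal_mul_I]
  have hsum : Summable fun n => ∫ ξ, ‖F n ξ‖ := by
    simp_rw [hnorm, integral_const_mul]
    exact hf.norm.mul_right _
  have key := integral_tsum_of_summable_integral_norm hint hsum
  have e1 : ∀ n, ∫ ξ, F n ξ = LSeries.term f σ n * w ((Real.log n - L) / δ) := by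
    intro n
    rw [fourier_inv_pt w, ← integral_const_mul]
  simp_rw [e1] at key
  rw [key]
  have e2 : ∀ ξ : ℝ, ∑' n, F n ξ = LSeries f (σ - ((2 * Real.pi * ξ / δ : ℝ) : ℂ) * Complex.I) *
      (Complex.exp (((-(2 * Real.pi * L * ξ / δ) : ℝ) : ℂ) * Complex.I) * g ξ) := by
    intro ξ
    rw [LSeries, ← tsum_mul_right]
    congr 1; ext n
    rw [term_shift]
    simp only [hF]
    have : Complex.exp (2 * Real.pi * Complex.I * (((Real.log n - L) / δ : ℝ) : ℂ) * ξ) =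
      Complex.exp (Complex.I * ((2 * Real.pi * ξ / δ : ℝ) : ℂ) * Real.log n) *
      Complex.exp (((-(2 * Real.pi * L * ξ / δ) : ℝ) : ℂ) * Complex.I) := by
      rw [← Complex.exp_add]; congr 1; push_cast; ring
    rw [this]; ring
  have e3 : ∀ ξ : ℝ, ‖∑' n, F n ξ‖ ≤ C / δ * ((1 + 2 * Real.pi * |ξ|) * ‖g ξ‖) := by
    intro ξ
    rw [e2, norm_mul, norm_mul, Complex.norm_exp_ofReal_mul_I, one_mul, ← mul_assoc]
    refine mul_le_mul_of_nonneg_right ((hb _).trans ?_) (norm_nonneg _)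
    rw [abs_div, abs_mul, abs_of_pos hδ, abs_of_pos (by positivity : (0:ℝ) < 2 * Real.pi)]
    have h5 : 1 + 2 * Real.pi * |ξ| / δ ≤ (1 + 2 * Real.pi * |ξ|) / δ := by
      rw [add_div]
      have : 1 ≤ 1 / δ := by rw [le_div_iff₀ hδ]; linarith
      linarith
    calc C * (1 + 2 * Real.pi * |ξ| / δ) ≤ C * ((1 + 2 * Real.pi * |ξ|) / δ) :=
          mul_le_mul_of_nonneg_left h5 hC.le
      _ = _ := by ring
  calc ‖∫ ξ, ∑' n, F n ξ‖ ≤ ∫ ξ, C / δ * ((1 + 2 * Real.pi * |ξ|) * ‖g ξ‖) :=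
        norm_integral_le_of_norm_le (i2.const_mul _) (Filter.Eventually.of_forall e3)
    _ = C * (∫ ξ : ℝ, (1 + 2 * Real.pi * |ξ|) * ‖g ξ‖) / δ := by
        rw [integral_const_mul]; ring
    _ ≤ _ := by gcongr; linarith

lemma bump_exists : ∃ w : SchwartzMap ℝ ℂ, ∃ r : ℝ → ℝ, (∀ v, w v = (r v : ℂ)) ∧ (∀ v, 0 ≤ r v) ∧ (∀ v, r v ≤ 1) ∧
    (∀ v, 1 / 4 ≤ v → v ≤ 3 / 4 → r v = 1) ∧ (∀ v, v ≤ 0 → r v = 0) ∧ (∀ v, 1 ≤ v → r v = 0) := by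
  let b : ContDiffBump (1 / 2 : ℝ) := ⟨1 / 4, 1 / 2, by norm_num, by norm_num⟩
  have hsm : ContDiff ℝ (⊤ : ℕ∞) (fun v => ((b v : ℝ) : ℂ)) :=
    Complex.ofRealCLM.contDiff.comp b.contDiff
  have hcs : HasCompactSupport (fun v => ((b v : ℝ) : ℂ)) :=
    b.hasCompactSupport.comp_left (g := fun x : ℝ => (x : ℂ)) (by simp)
  refine ⟨hcs.toSchwartzMap hsm, b, fun v => rfl, fun v => b.nonneg, fun v => b.le_one, ?_, ?_, ?_⟩
  · intro v h1 h2
    apply b.one_of_mem_closedBall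
    rw [Metric.mem_closedBall, Real.dist_eq, abs_le]
    constructor <;> simp only [b] <;> linarith
  · intro v hv
    apply b.zero_of_le_dist
    rw [Real.dist_eq, le_abs]
    right; simp only [b]; linarith
  · intro v hv
    apply b.zero_of_le_dist
    rw [Real.dist_eq, le_abs]
    left; simp only [b]; linarith

end PartP3

section PartP3b

open MeasureTheory FourierTransform ArithmeticFunction LSeries Filter

lemma short_core (w : SchwartzMap ℝ ℂ) (r : ℝ → ℝ) (hwr : ∀ v, w v = (r v : ℂ)) (hr0 : ∀ v, 0 ≤ r v)
    (hr1 : ∀ v, r v ≤ 1) (hrm : ∀ v, 1 / 4 ≤ v → v ≤ 3 / 4 → r v = 1) (hrl : ∀ v, v ≤ 0 → r v = 0)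
    (hrr : ∀ v, 1 ≤ v → r v = 0) (j : ℕ) (y L σ δ D : ℝ) (hL : 1 ≤ L) (hLy : L = Real.log y) (hy0 : 0 < y)
    (hσ : σ = 1 + 1 / L) (hδ : 0 < δ) (hδ1 : δ ≤ 1) (hL2 : 2 ≤ L) (hyδ : 4 ≤ y * δ)
    (hD : ‖∑' n, LSeries.term (logMul^[j] aL) σ n * w ((Real.log n - L) / δ)‖ ≤ D)
    (hno : ∀ p : ℕ, p.Prime → L < Real.log p → L + δ ≤ Real.log p) :
    L ^ j * δ / 108 ≤ D + (2 * L) ^ j / y * (2 * √(3 * y) * Real.log (3 * y)) := by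
  have hσ1 : 1 < σ := by rw [hσ]; have : 0 < 1 / L := by positivity
                         linarith
  set G : ℕ → ℝ := fun n => (Real.log n) ^ j * (n : ℝ) ^ (-σ) * r ((Real.log n - L) / δ) with hG
  have hGnn : ∀ n, 0 ≤ G n := by
    intro n
    have : 0 ≤ Real.log n := Real.log_natCast_nonneg n
    have := hr0 ((Real.log n - L) / δ)
    positivity
  have hexp1 : Real.exp δ ≤ 3 := by
    have := Real.exp_one_lt_d9
    have := Real.exp_le_exp.mpr hδ1
    linarith
  have hyL : Real.exp L = y := by rw [hLy, Real.exp_log hy0]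
  set S := Finset.Ioc 0 ⌊3 * y⌋₊ with hS
  -- support
  have hsupp : ∀ n : ℕ, G n ≠ 0 → y < n ∧ (n : ℝ) ≤ 3 * y ∧ L < Real.log n ∧ Real.log n < L + δ := by
    intro n hn
    have h1 : r ((Real.log n - L) / δ) ≠ 0 := by
      intro h; apply hn; simp [hG, h]
    have h2 : 0 < (Real.log n - L) / δ := by
      by_contra h; exact h1 (hrl _ (not_lt.mp h))
    have h3 : (Real.log n - L) / δ < 1 := by
      by_contra h; exact h1 (hrr _ (not_lt.mp h))
    rw [div_lt_one hδ] at h3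
    have h4 : 0 < Real.log n - L := by
      rcases div_pos_iff.mp h2 with h | h
      · exact h.1
      · linarith
    have hn0 : (0:ℝ) < n := by
      rcases Nat.eq_zero_or_pos n with rfl | h
      · simp at h4; linarith
      · exact_mod_cast h
    have e : Real.exp (Real.log n) = n := Real.exp_log hn0
    refine ⟨?_, ?_, by linarith, by linarith⟩
    · rw [← hyL, ← e]; exact Real.exp_lt_exp.mpr (by linarith)
    · have : (n : ℝ) ≤ Real.exp (L + δ) := by rw [← e]; exact Real.exp_le_exp.mpr (by linarith)
      rw [Real.exp_add, hyL] at this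
      nlinarith
  have hterm : ∀ n : ℕ, LSeries.term (logMul^[j] aL) σ n * w ((Real.log n - L) / δ) =
      ((G n * (vonMangoldt n - 1) : ℝ) : ℂ) := by
    intro n
    rw [hwr]
    rcases eq_or_ne n 0 with rfl | hn
    · have : G 0 = 0 := by
        by_contra h
        have := (hsupp 0 h).1
        simp at this; linarith
      simp [this]
    · rw [LSeries.term_of_ne_zero hn, logMul_iter, aL]
      simp only [hG]
      rw [Real.rpow_neg (by positivity)]
      push_cast
      rw [Complex.ofReal_cpow (by positivity)]
      push_cast
      field_simp
  have hts : ∑' n, LSeries.term (logMul^[j] aL) σ n * w ((Real.log n - L) / δ) =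
      ((∑ n ∈ S, G n * (vonMangoldt n - 1) : ℝ) : ℂ) := by
    rw [tsum_eq_sum (s := S)]
    · rw [Complex.ofReal_sum]
      exact Finset.sum_congr rfl fun n _ => hterm n
    · intro n hn
      rw [hterm]
      have : G n = 0 := by
        by_contra h
        obtain ⟨h1, h2, -⟩ := hsupp n h
        apply hn
        rw [hS, Finset.mem_Ioc]
        refine ⟨?_, Nat.le_floor h2⟩
        have : (0:ℝ) < n := by linarith
        exact_mod_cast this
      simp [this]
  rw [hts, Complex.norm_real, Real.norm_eq_abs] at hD
  have hD2 := (abs_le.mp hD).1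
  have hsplit : ∑ n ∈ S, G n * (vonMangoldt n - 1) = ∑ n ∈ S, G n * vonMangoldt n - ∑ n ∈ S, G n := by
    rw [← Finset.sum_sub_distrib]; exact Finset.sum_congr rfl fun n _ => by ring
  -- Lambda part
  have hlam : ∑ n ∈ S, G n * vonMangoldt n ≤ (2 * L) ^ j / y * (2 * √(3 * y) * Real.log (3 * y)) := by
    have hy2 : 1 ≤ 3 * y := by nlinarith
    have hψ := Chebyshev.psi_sub_theta_le hy2
    rw [Chebyshev.psi_sub_theta_eq_sum_not_prime] at hψ
    calc ∑ n ∈ S, G n * vonMangoldt n ≤ ∑ n ∈ S, (2 * L) ^ j / y * (if ¬ n.Prime then vonMangoldt n else 0) := by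
          refine Finset.sum_le_sum fun n _ => ?_
          by_cases hGn : G n = 0
          · rw [hGn, zero_mul]
            refine mul_nonneg (by positivity) ?_
            split_ifs
            · exact le_rfl
            · exact vonMangoldt_nonneg
          obtain ⟨h1, h2, h3, h4⟩ := hsupp n hGn
          have hp : ¬ n.Prime := fun hp => by have := hno n hp h3; linarith
          rw [if_pos hp]
          refine mul_le_mul_of_nonneg_right ?_ vonMangoldt_nonneg
          have hn0 : (0:ℝ) < n := by linarith
          have hn1 : (1:ℝ) ≤ n := by
            have : 0 < n := by exact_mod_cast hn0
            exact_mod_cast this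
          have g1 : (Real.log n) ^ j ≤ (2 * L) ^ j := pow_le_pow_left₀ (Real.log_nonneg hn1) (by linarith) _
          have g2 : (n : ℝ) ^ (-σ) ≤ 1 / y := by
            calc (n : ℝ) ^ (-σ) ≤ (n : ℝ) ^ (-1 : ℝ) := Real.rpow_le_rpow_of_exponent_le hn1 (by linarith)
              _ = 1 / n := by rw [Real.rpow_neg_one, one_div]
              _ ≤ 1 / y := one_div_le_one_div_of_le hy0 h1.le
          calc G n ≤ (2 * L) ^ j * (1 / y) * 1 := by
                simp only [hG]
                have := hr1 ((Real.log n - L) / δ)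
                have := hr0 ((Real.log n - L) / δ)
                gcongr
            _ = _ := by ring
      _ = (2 * L) ^ j / y * ∑ n ∈ S with ¬ n.Prime, vonMangoldt n := by
          rw [← Finset.mul_sum, Finset.sum_filter]
      _ ≤ _ := mul_le_mul_of_nonneg_left hψ (by positivity)
  -- main part
  have hmain : L ^ j * δ / 108 ≤ ∑ n ∈ S, G n := by
    set T := Finset.Ioc ⌊y * Real.exp (δ / 4)⌋₊ ⌊y * Real.exp (3 * δ / 4)⌋₊ with hT
    have e34 : y * Real.exp (3 * δ / 4) ≤ 3 * y := by
      have : Real.exp (3 * δ / 4) ≤ Real.exp δ := Real.exp_le_exp.mpr (by linarith)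
      nlinarith
    have hTS : T ⊆ S := by
      apply Finset.Ioc_subset_Ioc (Nat.zero_le _)
      exact Nat.floor_le_floor e34
    have hcard : y * δ / 4 ≤ (T.card : ℝ) := by
      rw [hT, Nat.card_Ioc]
      have a1 := Nat.floor_le (by positivity : 0 ≤ y * Real.exp (δ / 4))
      have a2 := Nat.lt_floor_add_one (y * Real.exp (3 * δ / 4))
      have a3 : Real.exp (3 * δ / 4) = Real.exp (δ / 4) * Real.exp (δ / 2) := by
        rw [← Real.exp_add]; congr 1; ring
      have a4 : δ / 2 + 1 ≤ Real.exp (δ / 2) := Real.add_one_le_exp _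
      have a5 : 1 ≤ Real.exp (δ / 4) := Real.one_le_exp (by linarith)
      have a6 : y * δ / 2 ≤ y * Real.exp (3 * δ / 4) - y * Real.exp (δ / 4) := by
        rw [a3]
        have : δ / 2 ≤ Real.exp (δ / 4) * (Real.exp (δ / 2) - 1) := by nlinarith
        nlinarith
      have a7 : (⌊y * Real.exp (3 * δ / 4)⌋₊ : ℝ) - ⌊y * Real.exp (δ / 4)⌋₊ ≤
          ((⌊y * Real.exp (3 * δ / 4)⌋₊ - ⌊y * Real.exp (δ / 4)⌋₊ : ℕ) : ℝ) := by
        rw [sub_le_iff_le_add]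
        exact_mod_cast le_tsub_add
      linarith
    have hlow : ∀ n ∈ T, L ^ j / (27 * y) ≤ G n := by
      intro n hn
      rw [hT, Finset.mem_Ioc] at hn
      have h1 : y * Real.exp (δ / 4) < n := (Nat.floor_lt (by positivity)).mp hn.1
      have h2 : (n : ℝ) ≤ y * Real.exp (3 * δ / 4) := (Nat.le_floor_iff (by positivity)).mp hn.2
      have hn0 : (0:ℝ) < n := lt_trans (by positivity) h1
      have l1 : L + δ / 4 ≤ Real.log n := by
        rw [Real.le_log_iff_exp_le hn0, Real.exp_add, hyL]; exact h1.le
      have l2 : Real.log n ≤ L + 3 * δ / 4 := by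
        rw [Real.log_le_iff_le_exp hn0, Real.exp_add, hyL]; exact h2
      have hr : r ((Real.log n - L) / δ) = 1 := by
        apply hrm
        · rw [le_div_iff₀ hδ]; linarith
        · rw [div_le_iff₀ hδ]; linarith
      simp only [hG]
      rw [hr, mul_one]
      have g1 : L ^ j ≤ (Real.log n) ^ j := pow_le_pow_left₀ (by linarith) (by linarith) _
      have g2 : 1 / (27 * y) ≤ (n : ℝ) ^ (-σ) := by
        rw [Real.rpow_def_of_pos hn0]
        have b1 : 1 / (27 * y) = Real.exp (-(Real.log 27 + L)) := by
          rw [Real.exp_neg, Real.exp_add, Real.exp_log (by norm_num), hyL, one_div]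
        rw [b1]
        apply Real.exp_le_exp.mpr
        have b2 : Real.log n * σ ≤ (L + 1) * (1 + 1 / L) := by
          rw [hσ]
          refine mul_le_mul_of_nonneg_right (by linarith) (by positivity)
        have b3 : (L + 1) * (1 + 1 / L) = L + 2 + 1 / L := by field_simp; ring
        have b4 : 1 / L ≤ 1 := by rw [div_le_one (by linarith)]; exact hL
        have b5 : 3 ≤ Real.log 27 := by
          rw [show (27:ℝ) = 3 ^ 3 by norm_num, Real.log_pow]
          have : 1 ≤ Real.log 3 := by
            rw [Real.le_log_iff_exp_le (by norm_num)]
            linarith [Real.exp_one_lt_d9]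
          push_cast; linarith
        linarith
      calc L ^ j / (27 * y) = L ^ j * (1 / (27 * y)) := by ring
        _ ≤ _ := by gcongr
    calc L ^ j * δ / 108 = (y * δ / 4) * (L ^ j / (27 * y)) := by field_simp; ring
      _ ≤ T.card * (L ^ j / (27 * y)) := by gcongr
      _ = ∑ n ∈ T, L ^ j / (27 * y) := by simp
      _ ≤ ∑ n ∈ T, G n := Finset.sum_le_sum hlow
      _ ≤ ∑ n ∈ S, G n := Finset.sum_le_sum_of_subset_of_nonneg hTS fun n _ _ => hGnn n
  linarith

theorem short_primes (A : ℕ) : ∃ L0 : ℝ, ∀ L : ℝ, L0 ≤ L → ∃ p : ℕ, p.Prime ∧ L < Real.log p ∧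
    Real.log p < L + 1 / L ^ A := by
  obtain ⟨w, r, hwr, hr0, hr1, hrm, hrl, hrr⟩ := bump_exists
  obtain ⟨K, hK, hker⟩ := kernel_bound w
  obtain ⟨C, hC, hb⟩ := aLj_bound (2 * A + 1)
  have t1 : ∀ᶠ L : ℝ in atTop, L ^ A * Real.exp (-L) < 1 / 4 :=
    (Real.tendsto_pow_mul_exp_neg_atTop_nhds_zero A).eventually_lt_const (by norm_num)
  have t2 : ∀ᶠ L : ℝ in atTop, (L / 2) ^ (2 * A + 2) * Real.exp (-(L / 2)) < 1 / (16 * 4 ^ (2 * A + 2)) :=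
    ((Real.tendsto_pow_mul_exp_neg_atTop_nhds_zero (2 * A + 2)).comp
      (tendsto_id.atTop_div_const (by norm_num : (0:ℝ) < 2))).eventually_lt_const (by positivity)
  have t3 := eventually_gt_atTop (108 * (C * K + 1))
  obtain ⟨L0, hL0⟩ := eventually_atTop.mp (t1.and (t2.and (t3.and (eventually_ge_atTop 2))))
  refine ⟨L0, fun L hL => ?_⟩
  obtain ⟨h1, h2, h3, h4⟩ := hL0 L hL
  by_contra hcon
  push Not at hcon
  have hLA : 0 < L ^ A := by positivity
  have hLA1 : 1 ≤ L ^ A := one_le_pow₀ (by linarith)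
  have hinv : 1 / L ≤ 1 := by rw [div_le_one (by linarith)]; linarith
  have hinv0 : 0 < 1 / L := by positivity
  have hE : ∀ u : ℝ, Real.exp u * Real.exp (-u) = 1 := fun u => by rw [← Real.exp_add]; simp
  have hS := hker (logMul^[2 * A + 1] aL) (1 + 1 / L) (C) L (1 / L ^ A) hC (by positivity)
    (by rw [div_le_one hLA]; exact hLA1) (aLj_summable _ (by
      simp only [Complex.ofReal_re]; linarith)) (fun τ => by
      have := hb (((1 + 1 / L : ℝ) : ℂ) - τ * Complex.I) (by simpa using (by linarith : 0 < L)) (by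
        have : L⁻¹ ≤ 1 := by rw [← one_div]; exact hinv
        simp; linarith)
      simpa using this)
  have hcore := short_core w r hwr hr0 hr1 hrm hrl hrr (2 * A + 1) (Real.exp L) L (1 + 1 / L) (1 / L ^ A) _
    (by linarith) (by simp) (Real.exp_pos _) rfl (by positivity) (by rw [div_le_one hLA]; exact hLA1) h4
    (by
      have := hE L
      have e0 := Real.exp_pos L
      rw [mul_one_div, le_div_iff₀ hLA]
      nlinarith) hS hcon
  have hrest : (2 * L) ^ (2 * A + 1) / Real.exp L * (2 * √(3 * Real.exp L) * Real.log (3 * Real.exp L)) ≤ 1 := by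
    have s1 : √(3 * Real.exp L) ≤ 2 * Real.exp (L / 2) := by
      apply Real.sqrt_le_iff.mpr
      refine ⟨by positivity, ?_⟩
      have : Real.exp L = Real.exp (L / 2) ^ 2 := by rw [← Real.exp_nat_mul]; congr 1; push_cast; ring
      rw [this]; nlinarith [sq_nonneg (Real.exp (L / 2))]
    have s2 : Real.log (3 * Real.exp L) ≤ 2 * L := by
      rw [Real.log_mul (by norm_num) (Real.exp_pos _).ne', Real.log_exp]
      have : Real.log 3 ≤ 2 := by linarith [Real.log_le_sub_one_of_pos (by norm_num : (0:ℝ) < 3)]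
      linarith
    have s3 : Real.exp L = Real.exp (L / 2) * Real.exp (L / 2) := by
      rw [← Real.exp_add]; congr 1; ring
    calc (2 * L) ^ (2 * A + 1) / Real.exp L * (2 * √(3 * Real.exp L) * Real.log (3 * Real.exp L))
        ≤ (2 * L) ^ (2 * A + 1) / Real.exp L * (2 * (2 * Real.exp (L / 2)) * (2 * L)) := by
          refine mul_le_mul_of_nonneg_left ?_ (by positivity)
          refine mul_le_mul (by linarith) s2 (Real.log_nonneg ?_) (by positivity)
          have := Real.one_le_exp (by linarith : 0 ≤ L)
          linarith
      _ = 16 * 4 ^ (2 * A + 2) / 4 * ((L / 2) ^ (2 * A + 2) * Real.exp (-(L / 2))) := by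
        rw [s3, Real.exp_neg]
        have : (2 * L) ^ (2 * A + 1) * (2 * L) = 4 ^ (2 * A + 2) * (L / 2) ^ (2 * A + 2) := by
          rw [← pow_succ, ← mul_pow]; congr 1; ring
        have e0 := Real.exp_pos (L / 2)
        generalize Real.exp (L / 2) = E at e0
        have e1 : (2 * L) ^ (2 * A + 1) / (E * E) * (2 * (2 * E) * (2 * L)) =
          4 * ((2 * L) ^ (2 * A + 1) * (2 * L)) / E := by field_simp; ring
        rw [e1, this]; ring
      _ ≤ 16 * 4 ^ (2 * A + 2) / 4 * (1 / (16 * 4 ^ (2 * A + 2))) := by gcongr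
      _ ≤ 1 := by rw [div_mul_div_comm, mul_one, div_le_one (by positivity)]; nlinarith [pow_pos (by norm_num : (0:ℝ) < 4) (2 * A + 2)]
  have f1 : L ^ (2 * A + 1) * (1 / L ^ A) / 108 = L * L ^ A / 108 := by
    field_simp; ring
  have f2 : C * K / (1 / L ^ A) = C * K * L ^ A := by field_simp
  rw [f1, f2] at hcore
  nlinarith

end PartP3b

section PartP4

lemma count_mult (a h m : ℕ) (hm : 0 < m) :
    |(∑ n ∈ Finset.Ioc a (a + h), if m ∣ n then (1:ℝ) else 0) - (h : ℝ) / m| ≤ 1 := by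
  have h1 : ∀ N : ℕ, (∑ n ∈ Finset.Ioc 0 N, if m ∣ n then (1:ℝ) else 0) = ((N / m : ℕ) : ℝ) := by
    intro N
    rw [Finset.sum_boole, Nat.Ioc_filter_dvd_card_eq_div]
  have h2 : (∑ n ∈ Finset.Ioc a (a + h), if m ∣ n then (1:ℝ) else 0) =
      (((a + h) / m : ℕ) : ℝ) - ((a / m : ℕ) : ℝ) := by
    rw [← h1, ← h1, eq_sub_iff_add_eq, add_comm,
      Finset.sum_Ioc_consecutive _ (Nat.zero_le _) (Nat.le_add_right _ _)]
  rw [h2]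
  have hm' : (0:ℝ) < m := by exact_mod_cast hm
  have b1 : (((a + h) / m : ℕ) : ℝ) ≤ (a + h : ℝ) / m := by
    have := @Nat.cast_div_le ℝ _ _ _ (a + h) m; push_cast at this; exact this
  have b2 : ((a / m : ℕ) : ℝ) ≤ (a : ℝ) / m := Nat.cast_div_le
  have b3 : ∀ N : ℕ, (N : ℝ) / m < ((N / m : ℕ) : ℝ) + 1 := by
    intro N
    rw [div_lt_iff₀ hm']
    have h3 := Nat.div_add_mod N m
    have h4 := Nat.mod_lt N hm
    have h5 : N < (N / m + 1) * m := by
      rw [add_mul, one_mul, mul_comm]; omega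
    exact_mod_cast h5
  have b4 := b3 a
  have b5 := b3 (a + h)
  push_cast at b5
  rw [add_div] at b1 b5
  rw [abs_le]; constructor <;> linarith

lemma quad_form {ι : Type*} (T : Finset ι) (b : ι → ℝ) (d : ι → ℕ) (hd : ∀ i ∈ T, 0 < d i) (a h : ℕ) :
    ∑ n ∈ Finset.Ioc a (a + h), (∑ i ∈ T, b i * (if d i ∣ n then (1:ℝ) else 0)) ^ 2 ≤
      h * (∑ i ∈ T, ∑ i' ∈ T, b i * b i' / (Nat.lcm (d i) (d i') : ℝ)) + (∑ i ∈ T, |b i|) ^ 2 := by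
  have e1 : ∀ n : ℕ, (∑ i ∈ T, b i * (if d i ∣ n then (1:ℝ) else 0)) ^ 2 =
      ∑ i ∈ T, ∑ i' ∈ T, b i * b i' * (if Nat.lcm (d i) (d i') ∣ n then (1:ℝ) else 0) := by
    intro n
    rw [sq, Finset.sum_mul_sum]
    refine Finset.sum_congr rfl fun i _ => Finset.sum_congr rfl fun i' _ => ?_
    by_cases h1 : d i ∣ n <;> by_cases h2 : d i' ∣ n <;> simp [Nat.lcm_dvd_iff, h1, h2]
  simp_rw [e1]
  rw [Finset.sum_comm]
  have e2 : ∀ i ∈ T, ∑ n ∈ Finset.Ioc a (a + h), ∑ i' ∈ T, b i * b i' *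
      (if Nat.lcm (d i) (d i') ∣ n then (1:ℝ) else 0) ≤
      ∑ i' ∈ T, ((h : ℝ) * (b i * b i' / (Nat.lcm (d i) (d i') : ℝ)) + |b i| * |b i'|) := by
    intro i hi
    rw [Finset.sum_comm]
    refine Finset.sum_le_sum fun i' hi' => ?_
    rw [← Finset.mul_sum]
    have := count_mult a h (Nat.lcm (d i) (d i')) (Nat.lcm_pos (hd i hi) (hd i' hi'))
    set N := ∑ n ∈ Finset.Ioc a (a + h), if Nat.lcm (d i) (d i') ∣ n then (1:ℝ) else 0
    have h3 : b i * b i' * (N - (h : ℝ) / (Nat.lcm (d i) (d i') : ℝ)) ≤ |b i| * |b i'| := by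
      refine (le_abs_self _).trans ?_
      rw [abs_mul, abs_mul]
      exact mul_le_of_le_one_right (by positivity) this
    have h4 : (h : ℝ) * (b i * b i' / (Nat.lcm (d i) (d i') : ℝ)) =
      b i * b i' * ((h : ℝ) / (Nat.lcm (d i) (d i') : ℝ)) := by ring
    rw [h4]; linarith
  refine (Finset.sum_le_sum e2).trans (le_of_eq ?_)
  rw [sq, Finset.sum_mul_sum, Finset.mul_sum, ← Finset.sum_add_distrib]
  refine Finset.sum_congr rfl fun i _ => ?_
  rw [Finset.sum_add_distrib, Finset.mul_sum]

lemma gcd_sum (z d d' : ℕ) (h0 : 0 < d) (h2 : d ≤ z) :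
    (Nat.gcd d d' : ℝ) = ∑ e ∈ Finset.Icc 1 z, (Nat.totient e : ℝ) * ((if e ∣ d then 1 else 0) * (if e ∣ d' then 1 else 0)) := by
  have hg : 0 < Nat.gcd d d' := Nat.gcd_pos_of_pos_left _ h0
  have h3 : ∀ e, ((if e ∣ d then (1:ℝ) else 0) * (if e ∣ d' then 1 else 0)) = if e ∣ Nat.gcd d d' then 1 else 0 := by
    intro e
    by_cases h1 : e ∣ d <;> by_cases h2 : e ∣ d' <;> simp [Nat.dvd_gcd_iff, h1, h2]
  simp_rw [h3, mul_ite, mul_one, mul_zero]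
  rw [← Finset.sum_filter]
  conv_lhs => rw [← Nat.sum_totient (Nat.gcd d d')]
  push_cast
  refine Finset.sum_congr ?_ fun _ _ => rfl
  ext e
  simp only [Nat.mem_divisors, Finset.mem_filter, Finset.mem_Icc]
  constructor
  · rintro ⟨h, -⟩
    refine ⟨⟨Nat.pos_of_dvd_of_pos h hg, ?_⟩, h⟩
    exact (Nat.le_of_dvd hg h).trans ((Nat.gcd_le_left _ h0).trans h2)
  · rintro ⟨-, h⟩
    exact ⟨h, hg.ne'⟩

lemma main_form {ι : Type*} (T : Finset ι) (β : ι → ℝ) (d : ι → ℕ) (z : ℕ) (hd : ∀ i ∈ T, 0 < d i)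
    (hz : ∀ i ∈ T, d i ≤ z) :
    ∑ i ∈ T, ∑ i' ∈ T, (β i * d i) * (β i' * d i') / (Nat.lcm (d i) (d i') : ℝ) =
      ∑ e ∈ Finset.Icc 1 z, (Nat.totient e : ℝ) * (∑ i ∈ T, β i * (if e ∣ d i then 1 else 0)) ^ 2 := by
  have e1 : ∀ i ∈ T, ∀ i' ∈ T, (β i * d i) * (β i' * d i') / (Nat.lcm (d i) (d i') : ℝ) =
      ∑ e ∈ Finset.Icc 1 z, (Nat.totient e : ℝ) * ((β i * (if e ∣ d i then 1 else 0)) * (β i' * (if e ∣ d i' then 1 else 0))) := by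
    intro i hi i' hi'
    have h1 : (d i * d i' : ℝ) = Nat.gcd (d i) (d i') * Nat.lcm (d i) (d i') := by
      exact_mod_cast (Nat.gcd_mul_lcm (d i) (d i')).symm
    have h2 : (0:ℝ) < Nat.lcm (d i) (d i') := by exact_mod_cast Nat.lcm_pos (hd i hi) (hd i' hi')
    have h3 : (β i * d i) * (β i' * d i') / (Nat.lcm (d i) (d i') : ℝ) = β i * β i' * Nat.gcd (d i) (d i') := by
      rw [div_eq_iff h2.ne']
      linear_combination β i * β i' * h1
    rw [h3, gcd_sum z _ _ (hd i hi) (hz i hi), Finset.mul_sum]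
    refine Finset.sum_congr rfl fun e _ => by ring
  rw [Finset.sum_congr rfl fun i hi => Finset.sum_congr rfl fun i' hi' => e1 i hi i' hi']
  have e2 : ∀ i ∈ T, ∑ i' ∈ T, ∑ e ∈ Finset.Icc 1 z, (Nat.totient e : ℝ) *
      ((β i * (if e ∣ d i then 1 else 0)) * (β i' * (if e ∣ d i' then 1 else 0))) =
      ∑ e ∈ Finset.Icc 1 z, ∑ i' ∈ T, (Nat.totient e : ℝ) *
      ((β i * (if e ∣ d i then 1 else 0)) * (β i' * (if e ∣ d i' then 1 else 0))) := fun i _ => Finset.sum_comm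
  rw [Finset.sum_congr rfl e2, Finset.sum_comm]
  refine Finset.sum_congr rfl fun e _ => ?_
  rw [sq, Finset.sum_mul_sum, Finset.mul_sum]
  refine Finset.sum_congr rfl fun i _ => ?_
  rw [Finset.mul_sum]

lemma moebius_ind (e q : ℕ) (hq : 0 < q) :
    ∑ x ∈ q.divisorsAntidiagonal, (ArithmeticFunction.moebius x.1 : ℝ) * (if e ∣ x.2 then 1 else 0) =
      if q = e then 1 else 0 := by
  have := (ArithmeticFunction.sum_eq_iff_sum_mul_moebius_eq (R := ℝ) (f := fun n => if n = e then 1 else 0)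
    (g := fun n => if e ∣ n then 1 else 0)).mp (by
      intro n hn
      rw [Finset.sum_ite_eq']
      simp [hn.ne'])
  exact this q hq

noncomputable def LL (z : ℕ) : ℝ := ∑ q ∈ Finset.Icc 1 z, (ArithmeticFunction.moebius q : ℝ) ^ 2 / (Nat.totient q : ℝ)

lemma sieve_core (z a h : ℕ) (P : Finset ℕ) (hP : P ⊆ Finset.Ioc a (a + h))
    (hpr : ∀ p ∈ P, p.Prime ∧ z < p) : (P.card : ℝ) * LL z ^ 2 ≤ h * LL z + (z : ℝ) ^ 6 := by
  classical
  set T : Finset (Σ _ : ℕ, ℕ × ℕ) := (Finset.Icc 1 z).sigma fun q => q.divisorsAntidiagonal with hT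
  set β : (Σ _ : ℕ, ℕ × ℕ) → ℝ := fun i => (ArithmeticFunction.moebius i.1 : ℝ) / (Nat.totient i.1 : ℝ) *
    (ArithmeticFunction.moebius i.2.1 : ℝ) with hβ
  set d : (Σ _ : ℕ, ℕ × ℕ) → ℕ := fun i => i.2.2 with hd
  have hmem : ∀ i ∈ T, 1 ≤ i.1 ∧ i.1 ≤ z ∧ i.2.1 * i.2.2 = i.1 := by
    intro i hi
    rw [hT, Finset.mem_sigma, Finset.mem_Icc, Nat.mem_divisorsAntidiagonal] at hi
    exact ⟨hi.1.1, hi.1.2, hi.2.1⟩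
  have hd0 : ∀ i ∈ T, 0 < d i := by
    intro i hi
    obtain ⟨h1, h2, h3⟩ := hmem i hi
    apply Nat.pos_of_ne_zero
    intro h0
    simp only [hd] at h0
    rw [h0] at h3; omega
  have hdz : ∀ i ∈ T, d i ≤ z := by
    intro i hi
    obtain ⟨h1, h2, h3⟩ := hmem i hi
    exact (Nat.le_of_dvd (by omega) ⟨i.2.1, by simp only [hd]; rw [← h3, mul_comm]⟩ : d i ≤ i.1).trans h2
  have hq := quad_form T (fun i => β i * d i) d hd0 a h
  rw [main_form T β d z hd0 hdz] at hq
  have hse : ∀ e ∈ Finset.Icc 1 z, ∑ i ∈ T, β i * (if e ∣ d i then (1:ℝ) else 0) =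
      (ArithmeticFunction.moebius e : ℝ) / (Nat.totient e : ℝ) := by
    intro e he
    rw [hT, Finset.sum_sigma]
    have : ∀ q ∈ Finset.Icc 1 z, ∑ x ∈ q.divisorsAntidiagonal, β ⟨q, x⟩ * (if e ∣ d ⟨q, x⟩ then (1:ℝ) else 0) =
        if q = e then (ArithmeticFunction.moebius e : ℝ) / (Nat.totient e : ℝ) else 0 := by
      intro q hq
      have := moebius_ind e q (Finset.mem_Icc.mp hq).1
      simp only [hβ, hd]
      simp_rw [mul_assoc]
      rw [← Finset.mul_sum, this]
      by_cases hqe : q = e <;> simp [hqe]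
    rw [Finset.sum_congr rfl this, Finset.sum_ite_eq', if_pos he]
  have hmain : ∑ e ∈ Finset.Icc 1 z, (Nat.totient e : ℝ) * (∑ i ∈ T, β i * (if e ∣ d i then (1:ℝ) else 0)) ^ 2 = LL z := by
    rw [LL]
    refine Finset.sum_congr rfl fun e he => ?_
    rw [hse e he]
    have : (0:ℝ) < Nat.totient e := by
      exact_mod_cast Nat.totient_pos.mpr (Finset.mem_Icc.mp he).1
    field_simp
  rw [hmain] at hq
  have herr : ∑ i ∈ T, |β i * d i| ≤ (z : ℝ) ^ 3 := by
    rw [hT, Finset.sum_sigma]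
    have : ∀ q ∈ Finset.Icc 1 z, ∑ x ∈ q.divisorsAntidiagonal, |β ⟨q, x⟩ * d ⟨q, x⟩| ≤ (z : ℝ) ^ 2 := by
      intro q hq
      obtain ⟨hq1, hq2⟩ := Finset.mem_Icc.mp hq
      have h1 : ∀ x ∈ q.divisorsAntidiagonal, |β ⟨q, x⟩ * d ⟨q, x⟩| ≤ (z : ℝ) := by
        intro x hx
        have hi : (⟨q, x⟩ : Σ _ : ℕ, ℕ × ℕ) ∈ T := by
          rw [hT, Finset.mem_sigma]; exact ⟨hq, hx⟩
        have h2 : (d ⟨q, x⟩ : ℝ) ≤ z := by exact_mod_cast hdz _ hi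
        have h3 : |β ⟨q, x⟩| ≤ 1 := by
          simp only [hβ]
          rw [abs_mul, abs_div]
          have m1 : |(ArithmeticFunction.moebius q : ℝ)| ≤ 1 := by
            exact_mod_cast ArithmeticFunction.abs_moebius_le_one
          have m2 : |(ArithmeticFunction.moebius x.1 : ℝ)| ≤ 1 := by
            exact_mod_cast ArithmeticFunction.abs_moebius_le_one
          have m3 : (1:ℝ) ≤ |(Nat.totient q : ℝ)| := by
            rw [abs_of_nonneg (by positivity)]
            exact_mod_cast Nat.totient_pos.mpr hq1
          have m4 : |(ArithmeticFunction.moebius q : ℝ)| / |(Nat.totient q : ℝ)| ≤ 1 := by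
            rw [div_le_one (by linarith)]; linarith
          exact mul_le_one₀ m4 (abs_nonneg _) m2
        rw [abs_mul, abs_of_nonneg (by positivity : (0:ℝ) ≤ d ⟨q, x⟩)]
        calc |β ⟨q, x⟩| * d ⟨q, x⟩ ≤ 1 * z := by gcongr
          _ = z := one_mul _
      calc ∑ x ∈ q.divisorsAntidiagonal, |β ⟨q, x⟩ * d ⟨q, x⟩| ≤ ∑ x ∈ q.divisorsAntidiagonal, (z : ℝ) :=
            Finset.sum_le_sum h1
        _ = q.divisorsAntidiagonal.card * (z : ℝ) := by simp
        _ ≤ z * z := by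
            have : q.divisorsAntidiagonal.card ≤ z := by
              rw [Finset.card_eq_sum_ones, Nat.sum_divisorsAntidiagonal (fun _ _ => 1), ← Finset.card_eq_sum_ones]
              exact (Nat.card_divisors_le_self q).trans hq2
            gcongr
        _ = (z : ℝ) ^ 2 := by ring
    calc _ ≤ ∑ q ∈ Finset.Icc 1 z, (z : ℝ) ^ 2 := Finset.sum_le_sum this
      _ = z * (z : ℝ) ^ 2 := by simp
      _ = (z : ℝ) ^ 3 := by ring
  have herr2 : (∑ i ∈ T, |β i * d i|) ^ 2 ≤ (z : ℝ) ^ 6 := by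
    calc _ ≤ ((z : ℝ) ^ 3) ^ 2 := pow_le_pow_left₀ (Finset.sum_nonneg fun _ _ => abs_nonneg _) herr 2
      _ = _ := by ring
  have hval : ∀ p ∈ P, ∑ i ∈ T, β i * d i * (if d i ∣ p then (1:ℝ) else 0) = LL z := by
    intro p hp
    obtain ⟨hp1, hp2⟩ := hpr p hp
    rw [hT, Finset.sum_sigma, LL]
    refine Finset.sum_congr rfl fun q hq => ?_
    obtain ⟨hq1, hq2⟩ := Finset.mem_Icc.mp hq
    have hmemq : (q, 1) ∈ q.divisorsAntidiagonal := by
      rw [Nat.mem_divisorsAntidiagonal]; simp; omega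
    rw [Finset.sum_eq_single_of_mem (q, 1) hmemq]
    · simp [hβ, hd]; ring
    · intro x hx hne
      have hi : (⟨q, x⟩ : Σ _ : ℕ, ℕ × ℕ) ∈ T := by
        rw [hT, Finset.mem_sigma]; exact ⟨hq, hx⟩
      have hz' := hdz _ hi
      rw [if_neg, mul_zero]
      intro hdvd
      rcases (Nat.dvd_prime hp1).mp hdvd with h | h
      · apply hne
        have h3 := (hmem _ hi).2.2
        simp only [hd] at h h3
        rw [h, mul_one] at h3
        exact Prod.ext h3 h
      · omega
  have hlow : (P.card : ℝ) * LL z ^ 2 ≤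
      ∑ n ∈ Finset.Ioc a (a + h), (∑ i ∈ T, β i * d i * (if d i ∣ n then (1:ℝ) else 0)) ^ 2 := by
    calc (P.card : ℝ) * LL z ^ 2 = ∑ p ∈ P, LL z ^ 2 := by simp
      _ = ∑ p ∈ P, (∑ i ∈ T, β i * d i * (if d i ∣ p then (1:ℝ) else 0)) ^ 2 :=
          Finset.sum_congr rfl fun p hp => by rw [hval p hp]
      _ ≤ _ := Finset.sum_le_sum_of_subset_of_nonneg hP fun _ _ _ => sq_nonneg _
  linarith

lemma LL_lower (z : ℕ) : Real.log (z + 1) / 2 ≤ LL z := by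
  classical
  set SF := (Finset.Icc 1 z).filter Squarefree with hSF
  have h1 : ∑ q ∈ SF, (1:ℝ) / q ≤ LL z := by
    rw [hSF, Finset.sum_filter, LL]
    refine Finset.sum_le_sum fun q hq => ?_
    obtain ⟨hq1, hq2⟩ := Finset.mem_Icc.mp hq
    have t0 : (0:ℝ) < Nat.totient q := by exact_mod_cast Nat.totient_pos.mpr hq1
    have t1 : (Nat.totient q : ℝ) ≤ q := by exact_mod_cast Nat.totient_le q
    split_ifs with hs
    · have : (ArithmeticFunction.moebius q : ℝ) ^ 2 = 1 := by
        exact_mod_cast ArithmeticFunction.moebius_sq_eq_one_of_squarefree hs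
      rw [this]
      exact one_div_le_one_div_of_le t0 t1
    · positivity
  have h2 : ∑ m ∈ Finset.Icc 1 z, (1:ℝ) / (m : ℝ) ^ 2 ≤ 2 := by
    have h := sum_Ioo_inv_sq_le (α := ℝ) 0 (z + 1)
    have e : Finset.Ioo 0 (z + 1) = Finset.Icc 1 z := by ext; simp; omega
    rw [e] at h
    simpa using h
  have h3 : Real.log (z + 1) ≤ ∑ n ∈ Finset.Icc 1 z, (1:ℝ) / n := by
    have := log_add_one_le_harmonic z
    rw [harmonic_eq_sum_Icc] at this
    push_cast at this
    simpa using this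
  have h4 : ∑ n ∈ Finset.Icc 1 z, (1:ℝ) / n ≤ (∑ q ∈ SF, (1:ℝ) / q) * ∑ m ∈ Finset.Icc 1 z, (1:ℝ) / (m : ℝ) ^ 2 := by
    choose f g hfg using Nat.sq_mul_squarefree
    rw [Finset.sum_mul_sum, ← Finset.sum_product']
    have hinj : Set.InjOn (fun n => (f n, g n)) (Finset.Icc 1 z : Set ℕ) := by
      intro a _ b _ hab
      simp only [Prod.mk.injEq] at hab
      rw [← (hfg a).1, ← (hfg b).1, hab.1, hab.2]
    calc ∑ n ∈ Finset.Icc 1 z, (1:ℝ) / n = ∑ n ∈ Finset.Icc 1 z, (1:ℝ) / (f n) * (1 / (g n : ℝ) ^ 2) := by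
          refine Finset.sum_congr rfl fun n hn => ?_
          have : (n : ℝ) = (g n : ℝ) ^ 2 * f n := by exact_mod_cast (hfg n).1.symm
          rw [div_mul_div_comm, one_mul, mul_comm, ← this]
      _ = ∑ x ∈ (Finset.Icc 1 z).image (fun n => (f n, g n)), (1:ℝ) / (x.1) * (1 / (x.2 : ℝ) ^ 2) := by
          rw [Finset.sum_image hinj]
      _ ≤ _ := by
          refine Finset.sum_le_sum_of_subset_of_nonneg ?_ fun _ _ _ => by positivity
          intro x hx
          rw [Finset.mem_image] at hx
          obtain ⟨n, hn, rfl⟩ := hx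
          obtain ⟨hn1, hn2⟩ := Finset.mem_Icc.mp hn
          obtain ⟨e1, e2⟩ := hfg n
          have fd : f n ∣ n := ⟨g n ^ 2, by rw [mul_comm]; exact e1.symm⟩
          have gd : g n ∣ n := ⟨g n * f n, by rw [← mul_assoc, ← sq]; exact e1.symm⟩
          have f1 := Nat.le_of_dvd hn1 fd
          have g1 := Nat.le_of_dvd hn1 gd
          have f0 := Nat.pos_of_dvd_of_pos fd hn1
          have g0 := Nat.pos_of_dvd_of_pos gd hn1
          simp only [Finset.mem_product, hSF, Finset.mem_filter, Finset.mem_Icc]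
          exact ⟨⟨⟨f0, by omega⟩, e2⟩, g0, by omega⟩
  have h5 : 0 ≤ ∑ q ∈ SF, (1:ℝ) / q := Finset.sum_nonneg fun _ _ => by positivity
  have h6 := mul_le_mul_of_nonneg_left h2 h5
  linarith

theorem sieve_bound (a h : ℕ) (hh : 3 ≤ h) (P : Finset ℕ) (hP : P ⊆ Finset.Ioc a (a + h))
    (hpr : ∀ p ∈ P, p.Prime ∧ h < p) : (P.card : ℝ) ≤ 156 * h / Real.log h := by
  have hh' : (3:ℝ) ≤ h := by exact_mod_cast hh
  have hl1 : 1 ≤ Real.log h := by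
    rw [Real.le_log_iff_exp_le (by linarith)]
    linarith [Real.exp_one_lt_d9]
  set y : ℝ := (h : ℝ) ^ (1 / 6 : ℝ) with hy
  have hy0 : 0 < y := by positivity
  have hy6 : y ^ 6 = h := by
    rw [hy, ← Real.rpow_natCast, ← Real.rpow_mul (by positivity)]; norm_num
  set z := ⌊y⌋₊ with hz
  have hzy : (z : ℝ) ≤ y := Nat.floor_le hy0.le
  have hz6 : (z : ℝ) ^ 6 ≤ h := by rw [← hy6]; gcongr
  have hzh : z ≤ h := by
    rcases Nat.eq_zero_or_pos z with h0 | h0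
    · omega
    · have : z ^ 6 ≤ h := by exact_mod_cast hz6
      exact (Nat.le_self_pow (by norm_num) z).trans this
  have hlz : Real.log h / 6 ≤ Real.log (z + 1) := by
    have : Real.log h = 6 * Real.log y := by rw [← hy6, Real.log_pow]; norm_num
    rw [this]
    have := Real.log_le_log hy0 (Nat.lt_floor_add_one y).le
    linarith
  have hLL := LL_lower z
  have hLL' : Real.log h / 12 ≤ LL z := by linarith
  have hL0 : 0 < LL z := by linarith
  have core := sieve_core z a h P hP fun p hp => ⟨(hpr p hp).1, lt_of_le_of_lt hzh (hpr p hp).2⟩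
  have c1 : (P.card : ℝ) * LL z * LL z ≤ (h * (1 + 12)) * LL z := by
    have : (1:ℝ) ≤ 12 * LL z := by linarith
    nlinarith
  have c2 : (P.card : ℝ) * LL z ≤ h * (1 + 12) := le_of_mul_le_mul_right c1 hL0
  rw [le_div_iff₀ (by linarith)]
  have c3 : (P.card : ℝ) * (Real.log h / 12) ≤ P.card * LL z := by gcongr
  linarith

end PartP4

section PartP5

open Filter

lemma case_short (A : ℕ) : ∃ κ : ℝ, ∀ k x : ℕ, κ ≤ Real.log k → k ≤ x → (x : ℝ) ≤ k * (Real.log k) ^ A →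
    ∃ p : ℕ, p.Prime ∧ x ≤ p ∧ p < x + k := by
  obtain ⟨L0, hL0⟩ := short_primes (A + 1)
  refine ⟨max L0 2, fun k x hk hkx hx => ?_⟩
  have h1 : L0 ≤ Real.log k := (le_max_left _ _).trans hk
  have h2 : 2 ≤ Real.log k := (le_max_right _ _).trans hk
  have hk0 : (0:ℝ) < k := by
    rcases Nat.eq_zero_or_pos k with h | h
    · rw [h] at h2; simp at h2; linarith
    · exact_mod_cast h
  have hkx' : (k : ℝ) ≤ x := by exact_mod_cast hkx
  have hx0 : (0:ℝ) < x := by linarith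
  have hlog : Real.log k ≤ Real.log x := Real.log_le_log hk0 hkx'
  obtain ⟨p, hp, hp1, hp2⟩ := hL0 (Real.log x) (by linarith)
  have hp0 : (0:ℝ) < p := by exact_mod_cast hp.pos
  refine ⟨p, hp, ?_, ?_⟩
  · have := (Real.log_lt_log_iff hx0 hp0).mp hp1
    exact_mod_cast this.le
  · have hδ0 : 0 < 1 / Real.log x ^ (A + 1) := by
      have : 0 < Real.log x := by linarith
      positivity
    have hδ1 : 1 / Real.log x ^ (A + 1) ≤ 1 := by
      rw [div_le_one (by have : 0 < Real.log x := by linarith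
                         positivity)]
      exact one_le_pow₀ (by linarith)
    set δ := 1 / Real.log x ^ (A + 1) with hδ
    have e1 : (p : ℝ) < x * Real.exp δ := by
      rw [← Real.exp_log hp0, ← Real.exp_log hx0, ← Real.exp_add]
      exact Real.exp_lt_exp.mpr hp2
    have e2 : Real.exp δ ≤ 1 + 2 * δ := by
      have := Real.abs_exp_sub_one_le (x := δ) (by rw [abs_of_pos hδ0]; exact hδ1)
      rw [abs_of_pos hδ0] at this
      have := (abs_le.mp this).2
      linarith
    have e3 : x * (2 * δ) ≤ k := by
      have lx : 0 < Real.log x := by linarith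
      have lk : 0 < Real.log k := by linarith
      rw [hδ, mul_one_div, mul_div_assoc', div_le_iff₀ (by positivity)]
      calc (x : ℝ) * 2 ≤ (k * (Real.log k) ^ A) * Real.log k := by gcongr
        _ = k * Real.log k ^ (A + 1) := by ring
        _ ≤ k * Real.log x ^ (A + 1) := by gcongr
    have e4 : (p : ℝ) < x + k := by nlinarith
    exact_mod_cast e4

lemma logC_lower (x k : ℕ) (hx : 1 ≤ x) (hk : 1 ≤ k) :
    k * Real.log (x / k) ≤ Real.log ((x + k - 1).choose k) := by
  have h1 := Nat.pow_le_choose (α := ℝ) k (x + k - 1)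
  have h2 : x + k - 1 + 1 - k = x := by omega
  rw [h2] at h1
  have hx0 : (0:ℝ) < x := by exact_mod_cast hx
  have hk0 : (0:ℝ) < k := by exact_mod_cast hk
  have hf : (0:ℝ) < (k.factorial : ℝ) := by exact_mod_cast k.factorial_pos
  have h3 : (k.factorial : ℝ) ≤ (k : ℝ) ^ k := by exact_mod_cast Nat.factorial_le_pow k
  rw [← Real.log_pow]
  apply Real.log_le_log (by positivity)
  refine le_trans ?_ h1
  rw [div_pow]
  gcongr

lemma log_sum (n : ℕ) : Real.log n = ∑ p ∈ n.primeFactors, (n.factorization p : ℝ) * Real.log p := by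
  rw [Real.log_nat_eq_sum_factorization]
  rfl

lemma fact_log_le (n k p : ℕ) (hn : 0 < n) (hp : p.Prime) :
    ((n.choose k).factorization p : ℝ) * Real.log p ≤ Real.log n := by
  rw [← Real.log_pow]
  have hp0 : (0:ℝ) < p := by exact_mod_cast hp.pos
  apply Real.log_le_log (by positivity)
  exact_mod_cast Nat.pow_factorization_choose_le hn

lemma dvd_prod_of_choose (x k p : ℕ) (h : p ∣ (x + k - 1).choose k) :
    p ∣ ∏ m ∈ Finset.range k, (x + m) := by
  rw [← Nat.ascFactorial_eq_prod_range, Nat.ascFactorial_eq_factorial_mul_choose']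
  exact h.mul_left _

lemma case_large (x k : ℕ) (Y : ℝ) (hk : 1 ≤ k) (hkx : k ≤ x)
    (hY : ∀ p : ℕ, p.Prime → p ∣ ∏ m ∈ Finset.range k, (x + m) → (p : ℝ) ≤ Y)
    (hπ : (Nat.primeCounting ⌊Y⌋₊ : ℝ) ≤ 2 / 5 * k) : Real.log x ≤ 5 / 3 * Real.log k + 2 / 3 := by
  have hk0 : (0:ℝ) < k := by exact_mod_cast hk
  have hkx' : (k : ℝ) ≤ x := by exact_mod_cast hkx
  have hx0 : (0:ℝ) < x := by linarith
  have hx1 : (1:ℝ) ≤ x := by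
    have : (1:ℝ) ≤ k := by exact_mod_cast hk
    linarith
  have h1 := logC_lower x k (by omega) hk
  rw [log_sum] at h1
  set C := (x + k - 1).choose k with hC
  have hN : Real.log ((x + k - 1 : ℕ) : ℝ) ≤ Real.log x + 1 := by
    have : ((x + k - 1 : ℕ) : ℝ) ≤ 2 * x := by
      have : x + k - 1 ≤ 2 * x := by omega
      exact_mod_cast this
    have h0 : (0:ℝ) < ((x + k - 1 : ℕ) : ℝ) := by
      have : 0 < x + k - 1 := by omega
      exact_mod_cast this
    have := Real.log_le_log h0 this
    rw [Real.log_mul (by norm_num) hx0.ne'] at this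
    linarith [Real.log_two_lt_d9]
  have hsub : C.primeFactors ⊆ Nat.primesLE ⌊Y⌋₊ := by
    intro p hp
    rw [Nat.mem_primeFactors] at hp
    rw [Nat.mem_primesLE]
    exact ⟨Nat.le_floor (hY p hp.1 (dvd_prod_of_choose x k p hp.2.1)), hp.1⟩
  have hcard : (C.primeFactors.card : ℝ) ≤ 2 / 5 * k := by
    refine le_trans ?_ hπ
    have := Finset.card_le_card hsub
    have e : (Nat.primesLE ⌊Y⌋₊).card = Nat.primeCounting ⌊Y⌋₊ := by
      rw [Nat.primesLE, Nat.primesBelow_card_eq_primeCounting']; rfl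
    rw [e] at this
    exact_mod_cast this
  have hlx : 0 ≤ Real.log x := Real.log_nonneg hx1
  have h2 : ∑ p ∈ C.primeFactors, (C.factorization p : ℝ) * Real.log p ≤ 2 / 5 * k * (Real.log x + 1) := by
    calc _ ≤ ∑ p ∈ C.primeFactors, (Real.log x + 1) := by
          refine Finset.sum_le_sum fun p hp => ?_
          exact (fact_log_le _ k p (by omega) (Nat.prime_of_mem_primeFactors hp)).trans hN
      _ = C.primeFactors.card * (Real.log x + 1) := by rw [Finset.sum_const, nsmul_eq_mul]
      _ ≤ _ := by gcongr
  have h3 : k * Real.log (x / k) ≤ k * (2 / 5 * (Real.log x + 1)) := by linarith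
  have h4 := le_of_mul_le_mul_left h3 hk0
  rw [Real.log_div hx0.ne' hk0.ne'] at h4
  linarith

lemma harm_bound (a b : ℕ) (ha : 1 ≤ a) (hab : a ≤ b) :
    ∑ m ∈ Finset.Icc a b, (1:ℝ) / m ≤ 1 + Real.log (b / a) := by
  induction b, hab using Nat.le_induction with
  | base =>
    have : (1:ℝ) ≤ a := by exact_mod_cast ha
    simp
    exact inv_le_one_of_one_le₀ this
  | succ b hab ih =>
    rw [← Finset.insert_Icc_right_eq_Icc_add_one (by omega), Finset.sum_insert (by simp)]
    have ha0 : (0:ℝ) < a := by exact_mod_cast ha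
    have hb0 : (0:ℝ) < b := by exact_mod_cast (by omega : 0 < b)
    have h1 := Real.log_le_sub_one_of_pos (show (0:ℝ) < b / (b + 1) by positivity)
    rw [Real.log_div hb0.ne' (by positivity)] at h1
    rw [Real.log_div hb0.ne' ha0.ne'] at ih
    rw [Real.log_div (by positivity) ha0.ne']
    push_cast
    have h2 : (b:ℝ) / (b + 1) - 1 = - (1 / (b + 1)) := by field_simp; ring
    linarith

set_option maxHeartbeats 1000000 in
lemma case_middle (x k : ℕ) (ℓ Y : ℝ) (hℓ : ℓ = Real.log k) (hYdef : Y = 2 / 7 * k * ℓ) (hl100 : 100 ≤ ℓ)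
    (hll : 10 ≤ Real.log ℓ) (hxk : k * ℓ < x) (hlx : Real.log x ≤ 7 / 4 * ℓ)
    (hπ : (Nat.primeCounting k : ℝ) ≤ 3 / 2 * k / ℓ)
    (hY : ∀ p : ℕ, p.Prime → p ∣ ∏ m ∈ Finset.range k, (x + m) → (p : ℝ) ≤ Y) :
    Real.log (x / k) ≤ 10000 * Real.log ℓ := by
  classical
  have hk1 : 1 ≤ k := by
    rcases Nat.eq_zero_or_pos k with h | h
    · rw [h] at hℓ; simp at hℓ; linarith
    · exact h
  have hk0 : (0:ℝ) < k := by exact_mod_cast hk1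
  have hℓ0 : 0 < ℓ := by linarith
  have hY0 : 0 < Y := by rw [hYdef]; positivity
  have hkx' : (k : ℝ) < x := by nlinarith
  have hkx : k < x := by exact_mod_cast hkx'
  have hx0 : (0:ℝ) < x := by linarith
  have hkbig : 2 ≤ k := by
    have := Real.log_le_sub_one_of_pos hk0
    have h2 : (2:ℝ) ≤ k := by linarith
    exact_mod_cast h2
  set N := x + k - 1 with hN
  have hN2 : (N : ℝ) ≤ 2 * x := by
    have : N ≤ 2 * x := by omega
    exact_mod_cast this
  have hN0 : 0 < N := by omega
  have hN0' : (0:ℝ) < N := by exact_mod_cast hN0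
  have hlog2x : Real.log (2 * x) ≤ 7 / 4 * ℓ + 1 := by
    rw [Real.log_mul (by norm_num) hx0.ne']
    linarith [Real.log_two_lt_d9]
  have hlogN : Real.log N ≤ 2 * ℓ := by
    have := Real.log_le_log hN0' hN2
    linarith
  have h2xk : 2 * (x : ℝ) < k ^ 2 := by
    rw [← Real.log_lt_log_iff (by positivity) (by positivity), Real.log_pow, ← hℓ]
    push_cast; linarith
  set C := N.choose k with hC
  have h1 := logC_lower x k (by omega) hk1
  rw [log_sum] at h1
  rw [← hN, ← hC] at h1
  rw [← Finset.sum_filter_add_sum_filter_not C.primeFactors (fun p => p ≤ k)] at h1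
  -- small primes
  have hsmall : ∑ p ∈ C.primeFactors with p ≤ k, (C.factorization p : ℝ) * Real.log p ≤ 3 * k := by
    have hsub : (C.primeFactors.filter fun p => p ≤ k) ⊆ Nat.primesLE k := by
      intro p hp
      rw [Finset.mem_filter, Nat.mem_primeFactors] at hp
      rw [Nat.mem_primesLE]
      exact ⟨hp.2, hp.1.1⟩
    have hcard : (((C.primeFactors.filter fun p => p ≤ k).card : ℕ) : ℝ) ≤ 3 / 2 * k / ℓ := by
      refine le_trans ?_ hπ
      have := Finset.card_le_card hsub
      have e : (Nat.primesLE k).card = Nat.primeCounting k := by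
        rw [Nat.primesLE, Nat.primesBelow_card_eq_primeCounting']; rfl
      rw [e] at this
      exact_mod_cast this
    calc _ ≤ ∑ p ∈ C.primeFactors with p ≤ k, (2 * ℓ) := by
          refine Finset.sum_le_sum fun p hp => ?_
          exact (fact_log_le _ k p hN0 (Nat.prime_of_mem_primeFactors (Finset.mem_filter.mp hp).1)).trans hlogN
      _ = (C.primeFactors.filter fun p => p ≤ k).card * (2 * ℓ) := by rw [Finset.sum_const, nsmul_eq_mul]
      _ ≤ 3 / 2 * k / ℓ * (2 * ℓ) := by gcongr
      _ = 3 * k := by field_simp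
  -- big primes
  set Q := C.primeFactors.filter fun p => ¬ p ≤ k with hQ
  have hQm : ∀ p ∈ Q, p.Prime ∧ k < p ∧ (p : ℝ) ≤ Y ∧ p ∣ ∏ m ∈ Finset.range k, (x + m) := by
    intro p hp
    rw [hQ, Finset.mem_filter, Nat.mem_primeFactors] at hp
    have hd := dvd_prod_of_choose x k p hp.1.2.1
    exact ⟨hp.1.1, by omega, hY p hp.1.1 hd, hd⟩
  have hlogY : Real.log Y ≤ 2 * ℓ := by
    have : Y ≤ k ^ 2 := by
      have h3 := Real.log_le_sub_one_of_pos hk0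
      rw [← hℓ] at h3
      rw [hYdef]; nlinarith
    have := Real.log_le_log hY0 this
    rw [Real.log_pow, ← hℓ] at this
    push_cast at this; exact this
  have hbig : ∑ p ∈ Q, (C.factorization p : ℝ) * Real.log p ≤ Q.card * (2 * ℓ) := by
    calc _ ≤ ∑ p ∈ Q, (2 * ℓ) := by
          refine Finset.sum_le_sum fun p hp => ?_
          obtain ⟨a1, a2, a3, a4⟩ := hQm p hp
          have hp0 : (1:ℝ) ≤ p := by exact_mod_cast a1.one_lt.le
          have hlp : Real.log p ≤ 2 * ℓ := (Real.log_le_log (by linarith) a3).trans hlogY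
          have hf : C.factorization p ≤ 1 := by
            apply Nat.factorization_choose_le_one
            have : (N : ℝ) < (p : ℝ) ^ 2 := by
              have : (k : ℝ) ≤ p := by exact_mod_cast a2.le
              nlinarith
            exact_mod_cast this
          have hf' : (C.factorization p : ℝ) ≤ 1 := by exact_mod_cast hf
          have := Real.log_nonneg hp0
          nlinarith
      _ = _ := by rw [Finset.sum_const, nsmul_eq_mul]
  -- covering
  set m1 := ⌈(x : ℝ) / Y⌉₊ with hm1
  set m2 := N / k with hm2
  have hm10 : 1 ≤ m1 := Nat.ceil_pos.mpr (by positivity)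
  set R : ℕ → Finset ℕ := fun m => Q.filter fun p => p ∈ Finset.Ioc ((x - 1) / m) ((x - 1) / m + (k / m + 1)) with hR
  have hcover : Q ⊆ (Finset.Icc m1 m2).biUnion R := by
    intro p hp
    obtain ⟨a1, a2, a3, a4⟩ := hQm p hp
    rw [a1.prime.dvd_finsetProd_iff] at a4
    obtain ⟨i, hi, m, hm⟩ := a4
    rw [Finset.mem_range] at hi
    have hmpos : 0 < m := by
      rcases Nat.eq_zero_or_pos m with h | h
      · rw [h] at hm; omega
      · exact h
    rw [Finset.mem_biUnion]
    refine ⟨m, ?_, ?_⟩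
    · rw [Finset.mem_Icc]
      constructor
      · apply Nat.ceil_le.mpr
        rw [div_le_iff₀ hY0]
        have : (x : ℝ) ≤ p * m := by
          have : x ≤ p * m := by omega
          exact_mod_cast this
        have hm' : (0:ℝ) < m := by exact_mod_cast hmpos
        nlinarith
      · rw [hm2, Nat.le_div_iff_mul_le hk1]
        have : m * k ≤ p * m := by rw [mul_comm p m]; exact Nat.mul_le_mul_left _ a2.le
        omega
    · simp only [hR, Finset.mem_filter, Finset.mem_Ioc]
      refine ⟨hp, ?_, ?_⟩
      · rw [Nat.div_lt_iff_lt_mul hmpos]; omega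
      · have e1 := Nat.div_add_mod (x - 1) m
        have e2 := Nat.div_add_mod k m
        have e3 := Nat.mod_lt (x - 1) hmpos
        have e4 := Nat.mod_lt k hmpos
        by_contra hcon
        push Not at hcon
        have h5 : m * ((x - 1) / m + (k / m + 1) + 1) ≤ p * m := by
          rw [mul_comm p m]; exact Nat.mul_le_mul_left _ hcon
        have h6 : m * ((x - 1) / m + (k / m + 1) + 1) = m * ((x - 1) / m) + m * (k / m) + m + m := by ring
        omega
  have hRcard : ∀ m ∈ Finset.Icc m1 m2, ((R m).card : ℝ) ≤ 2496 * k / ℓ * (1 / m) := by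
    intro m hm
    rw [Finset.mem_Icc] at hm
    have hmpos : 0 < m := by omega
    have hm' : (0:ℝ) < m := by exact_mod_cast hmpos
    have hmx : (x : ℝ) ≤ m * Y := by
      rw [← div_le_iff₀ hY0]
      exact (Nat.le_ceil _).trans (by exact_mod_cast hm.1)
    have hm2' : 2 ≤ m := by
      by_contra hcon
      have : m = 1 := by omega
      rw [this, hYdef] at hmx
      push_cast at hmx
      nlinarith
    have hmN : (m : ℝ) * k ≤ N := by
      have := (Nat.le_div_iff_mul_le hk1).mp hm.2
      exact_mod_cast this
    have hkm : (k : ℝ) ^ 2 / (2 * x) ≤ k / m := by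
      rw [div_le_div_iff₀ (by positivity) hm']
      nlinarith
    have hkm1 : 1 ≤ (k : ℝ) / m := by
      refine le_trans ?_ hkm
      rw [le_div_iff₀ (by positivity)]; linarith
    have hlogh : ℓ / 8 ≤ Real.log (k / m) := by
      have := Real.log_le_log (by positivity) hkm
      rw [Real.log_div (by positivity) (by positivity), Real.log_pow, ← hℓ] at this
      push_cast at this
      linarith
    have hh1 : (k : ℝ) / m ≤ ((k / m + 1 : ℕ) : ℝ) := by
      rw [div_le_iff₀ hm']
      have e2 := Nat.div_add_mod k m
      have e4 := Nat.mod_lt k hmpos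
      have : k ≤ (k / m + 1) * m := by rw [add_mul, one_mul, mul_comm]; omega
      exact_mod_cast this
    have hh2 : ((k / m + 1 : ℕ) : ℝ) ≤ 2 * (k / m) := by
      have : ((k / m : ℕ) : ℝ) ≤ (k : ℝ) / m := Nat.cast_div_le
      push_cast; linarith
    have hlogh2 : ℓ / 8 ≤ Real.log ((k / m + 1 : ℕ) : ℝ) :=
      hlogh.trans (Real.log_le_log (by positivity) hh1)
    have hh3 : 3 ≤ k / m + 1 := by
      have := Real.log_le_sub_one_of_pos (show (0:ℝ) < ((k / m + 1 : ℕ) : ℝ) by positivity)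
      have h3 : (3:ℝ) ≤ ((k / m + 1 : ℕ) : ℝ) := by linarith
      exact_mod_cast h3
    have hs := sieve_bound ((x - 1) / m) (k / m + 1) hh3 (R m) (by
      intro p hp
      exact (Finset.mem_filter.mp hp).2) (by
      intro p hp
      obtain ⟨a1, a2, -, -⟩ := hQm p (Finset.mem_filter.mp hp).1
      refine ⟨a1, lt_of_le_of_lt ?_ a2⟩
      have : k / m ≤ k / 2 := Nat.div_le_div_left hm2' (by norm_num)
      omega)
    refine hs.trans ?_
    calc 156 * ((k / m + 1 : ℕ) : ℝ) / Real.log ((k / m + 1 : ℕ) : ℝ) ≤ 156 * (2 * (k / m)) / (ℓ / 8) := by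
          gcongr
      _ = _ := by field_simp; ring
  have hQcard : (Q.card : ℝ) ≤ 2496 * k / ℓ * (1 + Real.log ℓ) := by
    have c1 : (Q.card : ℝ) ≤ ∑ m ∈ Finset.Icc m1 m2, ((R m).card : ℝ) := by
      exact_mod_cast (Finset.card_le_card hcover).trans Finset.card_biUnion_le
    refine (c1.trans (Finset.sum_le_sum hRcard)).trans ?_
    rw [← Finset.mul_sum]
    refine mul_le_mul_of_nonneg_left ?_ (by positivity)
    by_cases hmm : m1 ≤ m2
    · refine (harm_bound m1 m2 hm10 hmm).trans ?_
      have hm1' : (0:ℝ) < m1 := by exact_mod_cast hm10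
      have hm2p : (0:ℝ) < m2 := by exact_mod_cast (by omega : 0 < m2)
      have g1 : (x : ℝ) / Y ≤ m1 := Nat.le_ceil _
      have g2 : (m2 : ℝ) ≤ 2 * x / k := by
        have : (m2 : ℝ) ≤ (N : ℝ) / k := Nat.cast_div_le
        exact this.trans (by gcongr)
      have g3 : (m2 : ℝ) / m1 ≤ ℓ := by
        rw [div_le_iff₀ hm1']
        calc (m2 : ℝ) ≤ 2 * x / k := g2
          _ ≤ ℓ * (x / Y) := by
            rw [hYdef, mul_div_assoc', div_le_div_iff₀ hk0 (by positivity)]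
            have : 0 < ℓ * x * k := by positivity
            have e : 2 * (x : ℝ) * (2 / 7 * k * ℓ) = 4 / 7 * (ℓ * x * k) := by ring
            have e' : ℓ * x * k = 1 * (ℓ * x * k) := by ring
            rw [e]; linarith
          _ ≤ ℓ * m1 := by gcongr
      have := Real.log_le_log (by positivity) g3
      linarith
    · rw [Finset.Icc_eq_empty hmm]
      simp; linarith
  have hfin : k * Real.log (x / k) ≤ k * (3 + 4992 * (1 + Real.log ℓ)) := by
    have : (Q.card : ℝ) * (2 * ℓ) ≤ 2496 * k / ℓ * (1 + Real.log ℓ) * (2 * ℓ) := by gcongr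
    have e : 2496 * k / ℓ * (1 + Real.log ℓ) * (2 * ℓ) = 4992 * k * (1 + Real.log ℓ) := by
      field_simp; ring
    rw [e] at this
    linarith
  have := le_of_mul_le_mul_left hfin hk0
  linarith

theorem final_core : ∃ κ : ℕ, ∀ k x : ℕ, κ ≤ k → 1 ≤ x →
      (∀ m ∈ Finset.range k, ¬ (x + m).Prime) →
      (∀ p : ℕ, p.Prime → p ∣ ∏ m ∈ Finset.range k, (x + m) → (p : ℝ) ≤ 2 / 7 * k * Real.log k) → False := by
  obtain ⟨A, hA⟩ : ∃ A : ℕ, (A : ℝ) = 10000 := ⟨10000, by norm_num⟩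
  obtain ⟨κ0, hκ0⟩ := case_short A
  have tk : Tendsto (fun k : ℕ => (k : ℝ)) atTop atTop := tendsto_natCast_atTop_atTop
  have tl : Tendsto (fun k : ℕ => Real.log k) atTop atTop := Real.tendsto_log_atTop.comp tk
  have tll : Tendsto (fun k : ℕ => Real.log (Real.log k)) atTop atTop := Real.tendsto_log_atTop.comp tl
  have tY : Tendsto (fun k : ℕ => 2 / 7 * (k : ℝ) * Real.log k) atTop atTop :=
    (tk.const_mul_atTop (by norm_num)).atTop_mul_atTop₀ tl
  have hcheb := Chebyshev.eventually_primeCounting_le (ε := 0.01) (by norm_num)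
  have ev := (tl.eventually_ge_atTop κ0).and ((tl.eventually_ge_atTop 100).and
    ((tll.eventually_ge_atTop 10).and ((tk.eventually hcheb).and (tY.eventually hcheb))))
  obtain ⟨κ, hκ⟩ := eventually_atTop.mp ev
  refine ⟨max κ 1, fun k x hk hx hnp hY => ?_⟩
  obtain ⟨h1, h2, h3, h4, h5⟩ := hκ k ((le_max_left _ _).trans hk)
  have hk1 : 1 ≤ k := (le_max_right _ _).trans hk
  have hk0 : (0:ℝ) < k := by exact_mod_cast hk1
  have hlog4 : Real.log 4 + 0.01 ≤ 1.4 := by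
    rw [show (4:ℝ) = 2 ^ 2 by norm_num, Real.log_pow]
    have := Real.log_two_lt_d9
    push_cast; norm_num at this ⊢; linarith
  have hnp' : ∀ p : ℕ, p.Prime → x ≤ p → p < x + k → False := by
    intro p hp hp1 hp2
    have := hnp (p - x) (Finset.mem_range.mpr (by omega))
    rw [show x + (p - x) = p by omega] at this
    exact this hp
  by_cases hxk : x < k
  · obtain ⟨p, hp, hp1, hp2⟩ := Nat.exists_prime_lt_and_le_two_mul x (by omega)
    exact hnp' p hp (by omega) (by omega)
  push Not at hxk
  have hxk' : (k : ℝ) ≤ x := by exact_mod_cast hxk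
  have hx0 : (0:ℝ) < x := by linarith
  set ℓ := Real.log k with hℓ
  have hℓ0 : 0 < ℓ := by linarith
  by_cases hsh : (x : ℝ) ≤ k * ℓ ^ A
  · obtain ⟨p, hp, hp1, hp2⟩ := hκ0 k x h1 hxk hsh
    exact hnp' p hp hp1 hp2
  push Not at hsh
  set Y := 2 / 7 * (k : ℝ) * ℓ with hYdef
  have hkY : (k : ℝ) ≤ Y := by rw [hYdef]; nlinarith
  have hlY : ℓ ≤ Real.log Y := Real.log_le_log hk0 hkY
  have hπY : (Nat.primeCounting ⌊Y⌋₊ : ℝ) ≤ 2 / 5 * k := by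
    refine h5.trans ?_
    rw [div_le_iff₀ (by linarith)]
    have : 2 / 5 * k * ℓ ≤ 2 / 5 * k * Real.log Y := by gcongr
    have e : (Real.log 4 + 0.01) * Y ≤ 1.4 * Y := by gcongr
    have : 1.4 * Y = 2 / 5 * k * ℓ := by rw [hYdef]; ring
    linarith
  have hlarge := case_large x k Y hk1 hxk hY hπY
  have hπk : (Nat.primeCounting k : ℝ) ≤ 3 / 2 * k / ℓ := by
    rw [Nat.floor_natCast] at h4
    refine h4.trans ?_
    gcongr
    linarith
  have hA1 : ℓ ≤ ℓ ^ A := by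
    apply le_self_pow₀ (by linarith)
    intro h; rw [h] at hA; norm_num at hA
  have hmid := case_middle x k ℓ Y hℓ hYdef h2 h3 (lt_of_le_of_lt (by gcongr) hsh) (by linarith) hπk hY
  rw [← hA, ← Real.log_pow, Real.log_le_log_iff (by positivity) (by positivity), div_le_iff₀ hk0] at hmid
  linarith

end PartP5

/-- Erdős' theorem (with explicit constant `2/7` as in Luca–Saradha–Shorey): there is a
constant `κ` such that for all `k ≥ κ` and all positive `x` with `x, x+1, …, x+k-1` all
composite, the greatest prime factor of `Δ(x, k) = x(x+1)⋯(x+k-1)` exceeds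
`(2/7) k log k`. -/
theorem erdos_greatest_prime_factor :
    ∃ κ : ℕ, ∀ k x : ℕ, κ ≤ k → 1 ≤ x →
      (∀ m ∈ Finset.range k, ¬ (x + m).Prime) →
      (2 / 7 : ℝ) * k * Real.log k <
        (maxPrimeFac (∏ m ∈ Finset.range k, (x + m)) : ℝ) := by
  obtain ⟨κ, h⟩ := final_core
  refine ⟨κ, fun k x hk hx hnp => ?_⟩
  by_contra hcon
  push Not at hcon
  refine h k x hk hx hnp fun p hp hd => le_trans ?_ hcon
  have hne : ∏ m ∈ Finset.range k, (x + m) ≠ 0 := by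
    rw [Finset.prod_ne_zero_iff]
    intro m _
    omega
  have : p ≤ maxPrimeFac (∏ m ∈ Finset.range k, (x + m)) :=
    Finset.le_sup (f := id) (Nat.mem_primeFactors.mpr ⟨hp, hd, hne⟩)
  exact_mod_cast this
end

section
/- Assume the explicit abc conjecture: for all pairwise coprime positive integers a, b, c with a + b = c one has c < rad(a·b·c)^{7/4}. Let m ≥ 1 and 0 ≤ j₂ < j₁ be integers, and set d = gcd(m + j₁, j₁ − j₂). Then m/d ≤ (rad(m + j₁) · rad(m + j₂) · (j₁ − j₂)/d)^{7/4}. -/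
/-- The radical of a natural number: the product of its distinct prime factors. -/
def rad (n : ℕ) : ℕ := n.primeFactors.prod id

/-- The explicit abc conjecture (Baker / Laishram–Shorey form): for pairwise coprime
positive integers `a`, `b`, `c` with `a + b = c` one has `c < rad (a*b*c) ^ (7/4)`. -/
def ExplicitABC : Prop :=
  ∀ a b c : ℕ, 0 < a → 0 < b → 0 < c →
    Nat.Coprime a b → Nat.Coprime a c → Nat.Coprime b c → a + b = c →
    (c : ℝ) < (rad (a * b * c) : ℝ) ^ ((7 : ℝ) / 4)

theorem rad_eq_radical (n : ℕ) : rad n = UniqueFactorizationMonoid.radical n := by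
  rw [Nat.radical_eq_prod_primeFactors]; rfl

theorem rad_le_of_dvd {a b : ℕ} (h : a ∣ b) (hb : b ≠ 0) : rad a ≤ rad b := by
  simp only [rad_eq_radical]
  exact Nat.le_of_dvd (Nat.radical_pos b) (UniqueFactorizationMonoid.radical_dvd_radical h hb)

theorem rad_mul_le (a b : ℕ) : rad (a * b) ≤ rad a * rad b := by
  simp only [rad_eq_radical]
  exact Nat.le_of_dvd (Nat.mul_pos (Nat.radical_pos a) (Nat.radical_pos b))
    UniqueFactorizationMonoid.radical_mul_dvd

theorem rad_le_self {a : ℕ} (h : a ≠ 0) : rad a ≤ a := by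
  rw [rad_eq_radical]; exact Nat.radical_le_self_iff.2 h

/-- Central application of the explicit abc conjecture: for `m ≥ 1`, `0 ≤ j₂ < j₁` and
`d = gcd (m + j₁, j₁ - j₂)`, one has
`m / d ≤ (rad (m + j₁) · rad (m + j₂) · (j₁ - j₂) / d) ^ (7/4)`. -/
theorem abc_application_to_radicals
    (habc : ExplicitABC) (m j₁ j₂ : ℕ) (hm : 1 ≤ m) (hj : j₂ < j₁)
    (d : ℕ) (hd : d = Nat.gcd (m + j₁) (j₁ - j₂)) :
    (m : ℝ) / d ≤
      ((rad (m + j₁) : ℝ) * (rad (m + j₂) : ℝ) * (((j₁ - j₂ : ℕ) : ℝ) / d))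
        ^ ((7 : ℝ) / 4) := by
  obtain ⟨c, b, hcb, hc, hb⟩ := Nat.exists_coprime (m + j₁) (j₁ - j₂)
  rw [← hd] at hc hb
  have hd0 : 0 < d := by
    rw [hd]; exact Nat.gcd_pos_of_pos_left _ (by omega)
  have hb0 : 0 < b := by
    rcases Nat.eq_zero_or_pos b with h | h
    · subst h; omega
    · exact h
  have hbc : b < c := by
    refine lt_of_mul_lt_mul_right (a := d) ?_ (Nat.zero_le d)
    omega
  obtain ⟨a, rfl⟩ := Nat.exists_eq_add_of_lt hbc
  set e := a + 1 with he
  have hce : b + a + 1 = e + b := by omega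
  rw [hce] at hc hcb
  have ha : m + j₂ = e * d := by
    rw [Nat.add_mul] at hc; omega
  have heb : Nat.Coprime e b := by simpa using hcb
  have key := habc e b (e + b) (by omega) hb0 (by omega) heb (by simpa using heb)
    hcb.symm rfl
  have hdR : (0 : ℝ) < d := by exact_mod_cast hd0
  have h1 : (m : ℝ) / d ≤ ((e + b : ℕ) : ℝ) := by
    rw [div_le_iff₀ hdR]
    have : m ≤ (e + b) * d := by omega
    exact_mod_cast this
  have h2 : (((j₁ - j₂ : ℕ) : ℝ) / d) = (b : ℝ) := by
    rw [hb]; push_cast; field_simp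
  have h3 : rad (e * b * (e + b)) ≤ rad (m + j₁) * rad (m + j₂) * b := by
    calc rad (e * b * (e + b)) ≤ rad e * rad b * rad (e + b) :=
          (rad_mul_le _ _).trans (Nat.mul_le_mul_right _ (rad_mul_le _ _))
      _ ≤ rad (m + j₂) * b * rad (m + j₁) := by
          refine Nat.mul_le_mul (Nat.mul_le_mul ?_ (rad_le_self hb0.ne')) ?_
          · exact rad_le_of_dvd ⟨d, ha⟩ (by omega)
          · exact rad_le_of_dvd ⟨d, hc⟩ (by omega)
      _ = _ := by ring
  rw [h2]
  refine h1.trans (key.le.trans ?_)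
  refine Real.rpow_le_rpow (Nat.cast_nonneg _) ?_ (by norm_num)
  exact_mod_cast h3
end
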